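/- arXiv:1311.2863 — 2 statements merged into one kernel-verified Lean document; each statement's English description precedes it below -/
import Mathlib

section
/- Let D be a c-John domain in ℝⁿ, n ≥ 2 (bounded or unbounded), let τ, δ ∈ (0,1), 1 ≤ p < n/δ, and set q = np/(n−δp). Then there is a constant C = C(δ, τ, p, n, c) such that for every measurable u: D → ℝ with |u|_{W^{δ,p}_τ(D)} < ∞ there exists a real number a_u with (∫_D |u(x) − a_u|^q dx)^{1/q} ≤ C |u|_{W^{δ,p}_τ(D)}; moreover, if D is unbounded and u has compact support in D, then a_u can be taken to be 0. -/
open MeasureTheory Metric Set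
open scoped ENNReal NNReal BigOperators

noncomputable section

/-- Euclidean `n`-space. -/
abbrev Eucl (n : ℕ) : Type := EuclideanSpace ℝ (Fin n)

/-- `D` is a `c`-John domain (bounded or unbounded): an open connected set such that each
pair of points can be joined by a rectifiable curve, parametrized by arc length
(formalized as a `1`-Lipschitz parametrization on `[0, ℓ]`), along which
`dist(γ t, ∂D) ≥ min{t, ℓ - t}/c`. -/
def IsJohnDomain (n : ℕ) (c : ℝ) (D : Set (Eucl n)) : Prop :=
  IsOpen D ∧ IsConnected D ∧
    ∀ x₁ ∈ D, ∀ x₂ ∈ D, ∃ ℓ : ℝ, 0 ≤ ℓ ∧ ∃ γ : ℝ → Eucl n,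
      γ 0 = x₁ ∧ γ ℓ = x₂ ∧ (∀ t ∈ Icc (0:ℝ) ℓ, γ t ∈ D) ∧
      LipschitzOnWith 1 γ (Icc 0 ℓ) ∧
      ∀ t ∈ Icc (0:ℝ) ℓ, min t (ℓ - t) / c ≤ infDist (γ t) (frontier D)

/-- The ball `B(x, τ·dist(x, ∂G))`; by convention, if `∂G = ∅` (i.e. `G = ℝⁿ`)
it is all of `ℝⁿ`. -/
def tauBall (n : ℕ) (τ : ℝ) (G : Set (Eucl n)) (x : Eucl n) : Set (Eucl n) :=
  {y : Eucl n | edist x y < ENNReal.ofReal τ * EMetric.infEdist x (frontier G)}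

/-- The fractional kernel `|u x - u y|^p / |x - y|^(n + δp)` as an extended real. -/
def fracKernel (n : ℕ) (δ p : ℝ) (u : Eucl n → ℝ) (x y : Eucl n) : ℝ≥0∞ :=
  ENNReal.ofReal (|u x - u y| ^ p / dist x y ^ ((n : ℝ) + δ * p))

/-- The `p`-th power of the seminorm `|u|_{W^{δ,p}_τ(G)}`. -/
def fracEnergyTau (n : ℕ) (δ τ p : ℝ) (G : Set (Eucl n)) (u : Eucl n → ℝ) : ℝ≥0∞ :=
  ∫⁻ x in G, ∫⁻ y in tauBall n τ G x, fracKernel n δ p u x y ∂volume ∂volume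

/-- The `p`-th power of the seminorm `|u|_{W^{δ,p}(G)}`. -/
def fracEnergy (n : ℕ) (δ p : ℝ) (G : Set (Eucl n)) (u : Eucl n → ℝ) : ℝ≥0∞ :=
  ∫⁻ x in G, ∫⁻ y in G, fracKernel n δ p u x y ∂volume ∂volume

/-- The fractional `(δ,p)`-capacity of a compact set `K ⊆ G`:
`inf |u|_{W^{δ,p}(G)}^p` over `u ∈ C₀(G)` with `u ≥ 1` on `K`. -/
def fracCap (n : ℕ) (δ p : ℝ) (K G : Set (Eucl n)) : ℝ≥0∞ :=
  ⨅ (u : Eucl n → ℝ) (_ : Continuous u) (_ : HasCompactSupport u) (_ : tsupport u ⊆ G)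
    (_ : ∀ x ∈ K, 1 ≤ u x), fracEnergy n δ p G u

/-- The fractional `(δ,q,p)`-Hardy inequality holds in `G` with constant `C`. -/
def HasFracHardy (n : ℕ) (δ p q C : ℝ) (G : Set (Eucl n)) : Prop :=
  ∀ u : Eucl n → ℝ, Continuous u → HasCompactSupport u → tsupport u ⊆ G →
    (∫⁻ x in G, ENNReal.ofReal
        (|u x| ^ q / infDist x (frontier G) ^ (q * (δ + n * (1/q - 1/p)))) ∂volume)
      ≤ ENNReal.ofReal C * fracEnergy n δ p G u ^ (q / p)

/-- The closed axis-parallel cube with center `z` and half side length `r`. -/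
def cube (n : ℕ) (z : Eucl n) (r : ℝ) : Set (Eucl n) :=
  {x : Eucl n | ∀ i, |x i - z i| ≤ r}

/-- The quantity `|Q|^(-1-δ/n) ∫_Q |u - u_Q|` for the cube `Q = cube n z r`. -/
def aTerm (n : ℕ) (δ : ℝ) (u : Eucl n → ℝ) (z : Eucl n) (r : ℝ) : ℝ :=
  ((volume (cube n z r)).toReal) ^ (-(1:ℝ) - δ / n) *
    ∫ x in cube n z r, |u x - ⨍ y in cube n z r, u y ∂volume| ∂volume

/-- The seminorm `|u|_{A^{δ,p}_κ(G)}`: the supremum, over families `𝒬` of pairwise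
disjoint cubes `Q` (given by center-halfside pairs) with `κQ ⊆ G`, of the `L^p(G)`
norm of `∑_{Q ∈ 𝒬} (|Q|^(-1-δ/n) ∫_Q |u - u_Q|) χ_Q`. -/
def ASeminorm (n : ℕ) (κ δ p : ℝ) (G : Set (Eucl n)) (u : Eucl n → ℝ) : ℝ≥0∞ :=
  ⨆ (𝒬 : Set (Eucl n × ℝ)) (_ : ∀ c ∈ 𝒬, 0 < c.2 ∧ cube n c.1 (κ * c.2) ⊆ G)
    (_ : ∀ c ∈ 𝒬, ∀ c' ∈ 𝒬, c ≠ c' → cube n c.1 c.2 ∩ cube n c'.1 c'.2 = ∅),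
    (∫⁻ x in G,
        (∑' c : 𝒬, (cube n (c : Eucl n × ℝ).1 (c : Eucl n × ℝ).2).indicator
          (fun _ => ENNReal.ofReal (aTerm n δ u (c : Eucl n × ℝ).1 (c : Eucl n × ℝ).2)) x) ^ p
      ∂volume) ^ (1 / p)

/-- `Q` is a closed dyadic cube in `ℝⁿ`. -/
def IsDyadicCube (n : ℕ) (Q : Set (Eucl n)) : Prop :=
  ∃ (k : ℤ) (z : Fin n → ℤ),
    Q = {x : Eucl n | ∀ i, (z i : ℝ) * (2:ℝ) ^ k ≤ x i ∧ x i ≤ ((z i : ℝ) + 1) * (2:ℝ) ^ k}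

/-- `W` is a Whitney decomposition of the proper open set `G`: a countable family of
closed dyadic cubes with pairwise disjoint interiors whose union is `G`, with
`diam Q ≤ dist(Q, ∂G) ≤ 4 diam Q` for each cube `Q ∈ W`. -/
def IsWhitneyDecomposition (n : ℕ) (G : Set (Eucl n)) (W : Set (Set (Eucl n))) : Prop :=
  W.Countable ∧ (∀ Q ∈ W, IsDyadicCube n Q) ∧ ⋃₀ W = G ∧
    (W.Pairwise fun Q R => interior Q ∩ interior R = ∅) ∧
    ∀ Q ∈ W, (∀ x ∈ Q, Metric.diam Q ≤ infDist x (frontier G)) ∧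
      ∃ x ∈ Q, infDist x (frontier G) ≤ 4 * Metric.diam Q

/-- `lam` is an upper Assouad-type covering exponent for `E`: there is `C > 0` such
that for every `x ∈ E` and all `0 < r < R < 2 diam E`, the set `E ∩ B(x,R)` can be
covered by at most `C (R/r)^lam` balls centered in `E` of radius `r`. -/
def UpperAssouadBound (n : ℕ) (E : Set (Eucl n)) (lam : ℝ) : Prop :=
  ∃ C : ℝ, 0 < C ∧ ∀ x ∈ E, ∀ r R : ℝ, 0 < r → r < R →
    ENNReal.ofReal R < 2 * EMetric.diam E →
    ∃ F : Finset (Eucl n), ↑F ⊆ E ∧ (F.card : ℝ) ≤ C * (R / r) ^ lam ∧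
      E ∩ ball x R ⊆ ⋃ y ∈ F, ball y r

/-- The upper Assouad dimension of `E`. -/
def upperAssouadDim (n : ℕ) (E : Set (Eucl n)) : ℝ :=
  sInf {lam : ℝ | 0 ≤ lam ∧ UpperAssouadBound n E lam}

/-- `lam` is a lower Assouad-type exponent for `E`: there is `C > 0` such that for
every `x ∈ E` and all `0 < r < R < 2 diam E`, at least `C (R/r)^lam` balls centered
in `E` of radius `r` are needed to cover `E ∩ B(x,R)`. -/
def LowerAssouadBound (n : ℕ) (E : Set (Eucl n)) (lam : ℝ) : Prop :=
  ∃ C : ℝ, 0 < C ∧ ∀ x ∈ E, ∀ r R : ℝ, 0 < r → r < R →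
    ENNReal.ofReal R < 2 * EMetric.diam E →
    ∀ F : Finset (Eucl n), ↑F ⊆ E → (E ∩ ball x R ⊆ ⋃ y ∈ F, ball y r) →
      C * (R / r) ^ lam ≤ (F.card : ℝ)

/-- The lower Assouad dimension of `E`. -/
def lowerAssouadDim (n : ℕ) (E : Set (Eucl n)) : ℝ :=
  sSup {lam : ℝ | 0 ≤ lam ∧ LowerAssouadBound n E lam}

end

open MeasureTheory Metric Set
open scoped ENNReal NNReal BigOperators

lemma jd_ball_sub {n : ℕ} {D : Set (Eucl n)} (hD : IsOpen D) {x : Eucl n} (hx : x ∈ D) {r : ℝ}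
    (hr : r ≤ infDist x (frontier D)) : ball x r ⊆ D := by
  intro y hy
  by_contra hyD
  have hconn : IsPreconnected (ball x r) := (convex_ball x r).isPreconnected
  have hr0 : 0 < r := by
    by_contra h
    have : ball x r = ∅ := ball_eq_empty.2 (not_lt.1 h)
    rw [this] at hy; exact hy
  have hdis : ∀ z ∈ ball x r, z ∉ frontier D := by
    intro z hz hzf
    have h1 := infDist_le_dist_of_mem (x := x) hzf
    have h2 : dist z x < r := hz
    rw [dist_comm] at h2
    linarith
  have := hconn D (closure D)ᶜ hD isClosed_closure.isOpen_compl (by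
      intro z hz
      by_cases hzD : z ∈ D
      · exact Or.inl hzD
      · right
        intro hcl
        exact hdis z hz ⟨hcl, by rw [hD.interior_eq]; exact hzD⟩)
      ⟨x, mem_ball_self hr0, hx⟩ ⟨y, hy, by
        intro hcl
        exact hdis y hy ⟨hcl, by rw [hD.interior_eq]; exact hyD⟩⟩
  obtain ⟨z, -, hz1, hz2⟩ := this
  exact hz2 (subset_closure hz1)

/-- inner energy density -/
noncomputable def jdG (n : ℕ) (δ τ p : ℝ) (D : Set (Eucl n)) (u : Eucl n → ℝ) (x : Eucl n) : ℝ≥0∞ :=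
  ∫⁻ y in tauBall n τ D x, fracKernel n δ p u x y ∂volume

lemma jd_kernel_meas {n : ℕ} {δ p : ℝ} {u : Eucl n → ℝ} (hu : Measurable u) :
    Measurable (fun z : Eucl n × Eucl n => fracKernel n δ p u z.1 z.2) := by
  unfold fracKernel
  fun_prop

lemma jd_tau_meas {n : ℕ} {τ : ℝ} {D : Set (Eucl n)} :
    MeasurableSet {z : Eucl n × Eucl n | z.2 ∈ tauBall n τ D z.1} := by
  have h1 : Measurable (fun z : Eucl n × Eucl n => edist z.1 z.2) := by fun_prop
  have h2 : Measurable (fun z : Eucl n × Eucl n =>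
      ENNReal.ofReal τ * Metric.infEDist z.1 (frontier D)) :=
    ((Metric.continuous_infEDist.measurable).comp measurable_fst).const_mul _
  exact measurableSet_lt h1 h2

lemma jd_tau_meas' {n : ℕ} {τ : ℝ} {D : Set (Eucl n)} (x : Eucl n) :
    MeasurableSet (tauBall n τ D x) := by
  have h1 : Measurable (fun z : Eucl n => edist x z) := by fun_prop
  exact measurableSet_lt h1 measurable_const

lemma jdG_meas {n : ℕ} {δ τ p : ℝ} {D : Set (Eucl n)} {u : Eucl n → ℝ} (hu : Measurable u) :
    Measurable (jdG n δ τ p D u) := by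
  have h : jdG n δ τ p D u = fun x => ∫⁻ y, ({z : Eucl n × Eucl n | z.2 ∈ tauBall n τ D z.1}.indicator
      (fun z => fracKernel n δ p u z.1 z.2)) (x, y) := by
    funext x
    unfold jdG
    rw [← lintegral_indicator (jd_tau_meas' x)]
    rfl
  rw [h]
  exact ((jd_kernel_meas hu).indicator jd_tau_meas).lintegral_prod_right'

lemma jd_energy_eq {n : ℕ} {δ τ p : ℝ} {D : Set (Eucl n)} {u : Eucl n → ℝ} :
    fracEnergyTau n δ τ p D u = ∫⁻ x in D, jdG n δ τ p D u x := rfl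

/-- volume of the unit ball -/
noncomputable def jdw (n : ℕ) : ℝ := (volume (ball (0 : Eucl n) 1)).toReal

lemma jdw_pos (n : ℕ) : 0 < jdw n :=
  ENNReal.toReal_pos (measure_ball_pos _ _ one_pos).ne' measure_ball_lt_top.ne

lemma jd_vol_ball {n : ℕ} (x : Eucl n) {r : ℝ} (hr : 0 < r) :
    volume (ball x r) = ENNReal.ofReal (jdw n * r ^ n) := by
  rw [Measure.addHaar_ball_of_pos _ _ hr, finrank_euclideanSpace, Fintype.card_fin, jdw, mul_comm,
    ENNReal.ofReal_mul ENNReal.toReal_nonneg, ENNReal.ofReal_toReal measure_ball_lt_top.ne]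

lemma jd_vol_cball {n : ℕ} (x : Eucl n) {r : ℝ} (hr : 0 < r) :
    volume (closedBall x r) = ENNReal.ofReal (jdw n * r ^ n) := by
  rw [Measure.addHaar_closedBall _ _ hr.le, finrank_euclideanSpace, Fintype.card_fin, jdw, mul_comm,
    ENNReal.ofReal_mul ENNReal.toReal_nonneg, ENNReal.ofReal_toReal measure_ball_lt_top.ne]

/-- Pointwise bound of a difference by the kernel. -/
lemma jd_diff_le {n : ℕ} {δ p : ℝ} (hp : 1 ≤ p) (hδ : 0 < δ) {u : Eucl n → ℝ} {x y : Eucl n}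
    {θ R : ℝ} (hθ : 0 < θ) (hR : dist x y ≤ R) :
    ENNReal.ofReal |u x - u y| ≤ ENNReal.ofReal θ +
      ENNReal.ofReal (θ ^ (1 - p) * R ^ ((n : ℝ) + δ * p)) * fracKernel n δ p u x y := by
  unfold fracKernel
  have hR0 : 0 ≤ R := dist_nonneg.trans hR
  rw [← ENNReal.ofReal_mul (by positivity), ← ENNReal.ofReal_add hθ.le (by positivity)]
  apply ENNReal.ofReal_le_ofReal
  rcases le_or_gt |u x - u y| θ with h | h
  · have : 0 ≤ θ ^ (1 - p) * R ^ ((n : ℝ) + δ * p) *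
      (|u x - u y| ^ p / dist x y ^ ((n : ℝ) + δ * p)) := by positivity
    linarith
  · have hd : 0 < dist x y := by
      rw [dist_pos]
      rintro rfl
      simp at h
      linarith
    have hpos : 0 < |u x - u y| := hθ.trans h
    have he : 0 ≤ (n : ℝ) + δ * p := by positivity
    have h1 : dist x y ^ ((n : ℝ) + δ * p) ≤ R ^ ((n : ℝ) + δ * p) :=
      Real.rpow_le_rpow hd.le hR he
    have h2 : |u x - u y| ^ (1 - p) ≤ θ ^ (1 - p) :=
      Real.rpow_le_rpow_of_nonpos hθ h.le (by linarith)
    have h3 : |u x - u y| = |u x - u y| ^ (1 - p) * |u x - u y| ^ p := by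
      rw [← Real.rpow_add hpos]; simp
    have h4 : 0 < dist x y ^ ((n : ℝ) + δ * p) := by positivity
    calc |u x - u y| = |u x - u y| ^ (1 - p) * |u x - u y| ^ p := h3
      _ ≤ θ ^ (1 - p) * |u x - u y| ^ p := by gcongr
      _ = θ ^ (1 - p) * dist x y ^ ((n : ℝ) + δ * p) *
          (|u x - u y| ^ p / dist x y ^ ((n : ℝ) + δ * p)) := by field_simp
      _ ≤ θ ^ (1 - p) * R ^ ((n : ℝ) + δ * p) *
          (|u x - u y| ^ p / dist x y ^ ((n : ℝ) + δ * p)) := by gcongr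
      _ ≤ _ := by linarith

/-- Integral of differences from a point over a set inside the `τ`-ball. -/
lemma jd_int_point {n : ℕ} {δ τ p : ℝ} (hp : 1 ≤ p) (hδ : 0 < δ) {D : Set (Eucl n)}
    {u : Eucl n → ℝ} (hu : Measurable u) {x : Eucl n} {B : Set (Eucl n)} (hBm : MeasurableSet B)
    (hB : B ⊆ tauBall n τ D x)
    {θ R : ℝ} (hθ : 0 < θ) (hR : ∀ y ∈ B, dist x y ≤ R) :
    ∫⁻ y in B, ENNReal.ofReal |u x - u y| ≤ ENNReal.ofReal θ * volume B +
      ENNReal.ofReal (θ ^ (1 - p) * R ^ ((n : ℝ) + δ * p)) * jdG n δ τ p D u x := by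
  have hk : Measurable (fun y => fracKernel n δ p u x y) := by
    unfold fracKernel
    fun_prop
  calc ∫⁻ y in B, ENNReal.ofReal |u x - u y|
      ≤ ∫⁻ y in B, (ENNReal.ofReal θ +
        ENNReal.ofReal (θ ^ (1 - p) * R ^ ((n : ℝ) + δ * p)) * fracKernel n δ p u x y) :=
        setLIntegral_mono' hBm (fun y hy => jd_diff_le hp hδ hθ (hR y hy))
    _ = ENNReal.ofReal θ * volume B +
      ENNReal.ofReal (θ ^ (1 - p) * R ^ ((n : ℝ) + δ * p)) * ∫⁻ y in B, fracKernel n δ p u x y := by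
        rw [lintegral_add_left measurable_const, lintegral_const_mul _ hk]
        simp
    _ ≤ _ := by
        unfold jdG
        exact add_le_add le_rfl (mul_le_mul' le_rfl (lintegral_mono_set hB))

/-- Averages step. -/
lemma jd_step {n : ℕ} {δ τ p : ℝ} (hp : 1 ≤ p) (hδ : 0 < δ) {D : Set (Eucl n)}
    {u : Eucl n → ℝ} (hu : Measurable u) {x : Eucl n} {A B S : Set (Eucl n)}
    (hAm : MeasurableSet A) (hBm : MeasurableSet B)
    (hA0 : volume A ≠ 0) (hB0 : volume B ≠ 0) (hA1 : volume A ≠ ⊤) (hB1 : volume B ≠ ⊤)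
    (hAS : A ⊆ S)
    (hB : ∀ z ∈ A, B ⊆ tauBall n τ D z)
    {θ R : ℝ} (hθ : 0 < θ) (hR : ∀ z ∈ A, ∀ y ∈ B, dist z y ≤ R) :
    (∫⁻ y in A, ENNReal.ofReal |u x - u y|) / volume A ≤
      (∫⁻ y in B, ENNReal.ofReal |u x - u y|) / volume B + ENNReal.ofReal θ +
      ENNReal.ofReal (θ ^ (1 - p) * R ^ ((n : ℝ) + δ * p)) * (∫⁻ z in S, jdG n δ τ p D u z)
        / (volume A * volume B) := by
  have hm : ∀ z, Measurable (fun y => ENNReal.ofReal |u z - u y|) := fun z => by fun_prop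
  have h1 : ∀ z ∈ A, ENNReal.ofReal |u x - u z| * volume B ≤
      (∫⁻ y in B, ENNReal.ofReal |u x - u y|) + (ENNReal.ofReal θ * volume B +
      ENNReal.ofReal (θ ^ (1 - p) * R ^ ((n : ℝ) + δ * p)) * jdG n δ τ p D u z) := by
    intro z hz
    calc ENNReal.ofReal |u x - u z| * volume B = ∫⁻ y in B, ENNReal.ofReal |u x - u z| := by simp
      _ ≤ ∫⁻ y in B, (ENNReal.ofReal |u x - u y| + ENNReal.ofReal |u z - u y|) := by
          refine lintegral_mono fun y => ?_
          rw [← ENNReal.ofReal_add (abs_nonneg _) (abs_nonneg _)]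
          apply ENNReal.ofReal_le_ofReal
          rw [abs_sub_comm (u z)]
          exact abs_sub_le _ _ _
      _ = (∫⁻ y in B, ENNReal.ofReal |u x - u y|) + ∫⁻ y in B, ENNReal.ofReal |u z - u y| :=
          lintegral_add_left (hm x) _
      _ ≤ _ := by
          gcongr
          exact jd_int_point hp hδ hu hBm (hB z hz) hθ (hR z hz)
  have h2 : (∫⁻ z in A, ENNReal.ofReal |u x - u z|) * volume B ≤
      (∫⁻ y in B, ENNReal.ofReal |u x - u y|) * volume A + (ENNReal.ofReal θ * volume B * volume A +
      ENNReal.ofReal (θ ^ (1 - p) * R ^ ((n : ℝ) + δ * p)) * ∫⁻ z in S, jdG n δ τ p D u z) := by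
    rw [← lintegral_mul_const _ (hm x)]
    refine (setLIntegral_mono' hAm h1).trans ?_
    rw [lintegral_add_left measurable_const, lintegral_add_left measurable_const,
      lintegral_const_mul _ (jdG_meas hu)]
    simp only [lintegral_const, Measure.restrict_apply, MeasurableSet.univ, univ_inter]
    gcongr
  rw [ENNReal.div_le_iff hA0 hA1, ← ENNReal.mul_le_mul_iff_left hB0 hB1]
  refine h2.trans (le_of_eq ?_)
  have hAB0 : volume A * volume B ≠ 0 := mul_ne_zero hA0 hB0
  have hAB1 : volume A * volume B ≠ ⊤ := ENNReal.mul_ne_top hA1 hB1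
  rw [add_mul, add_mul, add_mul, add_mul, mul_assoc (_ / (volume A * volume B)),
    ENNReal.div_mul_cancel hAB0 hAB1, mul_right_comm _ (volume A) (volume B),
    ENNReal.div_mul_cancel hB0 hB1]
  ring

open MeasureTheory Metric Set
open scoped ENNReal NNReal BigOperators

lemma jd_geom {s δ η : ℝ} (hs0 : 0 < s) (hs1 : s < 1) (hδ : 0 < δ) (hη : 0 < η) (N : ℕ) :
    ∀ T : ℝ, 0 < T → ∑ k ∈ Finset.range N, min ((T * s ^ k) ^ δ) ((T * s ^ k) ^ (-η)) ≤
      (1 - s ^ δ)⁻¹ + (1 - s ^ η)⁻¹ := by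
  have a1 : s ^ δ < 1 := Real.rpow_lt_one hs0.le hs1 hδ
  have a2 : s ^ η < 1 := Real.rpow_lt_one hs0.le hs1 hη
  have a0 : 0 < s ^ δ := by positivity
  have b0 : 0 < s ^ η := by positivity
  have key : ∀ T : ℝ, 0 < T →
      (T ≤ 1 → ∑ k ∈ Finset.range N, min ((T * s ^ k) ^ δ) ((T * s ^ k) ^ (-η)) ≤
        T ^ δ * (1 - s ^ δ)⁻¹) ∧
      (1 < T → ∑ k ∈ Finset.range N, min ((T * s ^ k) ^ δ) ((T * s ^ k) ^ (-η)) ≤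
        (1 - s ^ δ)⁻¹ + (1 - s ^ η)⁻¹ * (1 - s ^ η * T ^ (-η))) := by
    induction N with
    | zero =>
      intro T hT
      refine ⟨fun _ => ?_, fun h => ?_⟩
      · simp
        have : 0 < 1 - s ^ δ := by linarith
        positivity
      · simp only [Finset.range_zero, Finset.sum_empty]
        have h1 : 0 < 1 - s ^ δ := by linarith
        have h2 : 0 < 1 - s ^ η := by linarith
        have h3 : T ^ (-η) ≤ 1 := Real.rpow_le_one_of_one_le_of_nonpos h.le (by linarith)
        have h4 : 0 < T ^ (-η) := by positivity
        have h5 : 0 ≤ 1 - s ^ η * T ^ (-η) := by nlinarith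
        positivity
    | succ N ih =>
      intro T hT
      have hTs : 0 < T * s := by positivity
      obtain ⟨i1, i2⟩ := ih (T * s) hTs
      have hsum : ∑ k ∈ Finset.range (N + 1), min ((T * s ^ k) ^ δ) ((T * s ^ k) ^ (-η)) =
          ∑ k ∈ Finset.range N, min ((T * s * s ^ k) ^ δ) ((T * s * s ^ k) ^ (-η)) +
            min (T ^ δ) (T ^ (-η)) := by
        rw [Finset.sum_range_succ']
        simp only [pow_zero, mul_one, pow_succ']
        simp only [mul_assoc]
      rw [hsum]
      have hd : (1 - s ^ δ) * (1 - s ^ δ)⁻¹ = 1 := mul_inv_cancel₀ (by linarith)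
      have he : (1 - s ^ η) * (1 - s ^ η)⁻¹ = 1 := mul_inv_cancel₀ (by linarith)
      have hip : 0 < (1 - s ^ δ)⁻¹ := inv_pos.2 (by linarith)
      have hip2 : 0 < (1 - s ^ η)⁻¹ := inv_pos.2 (by linarith)
      have hTd : 0 < T ^ δ := by positivity
      refine ⟨fun h => ?_, fun h => ?_⟩
      · have j := i1 (by nlinarith)
        rw [Real.mul_rpow hT.le hs0.le] at j
        have := min_le_left (T ^ δ) (T ^ (-η))
        have e : T ^ δ * (1 - s ^ δ)⁻¹ = T ^ δ * s ^ δ * (1 - s ^ δ)⁻¹ + T ^ δ := by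
          linear_combination T ^ δ * hd
        linarith
      · have m := min_le_right (T ^ δ) (T ^ (-η))
        have h3 : T ^ (-η) ≤ 1 := Real.rpow_le_one_of_one_le_of_nonpos h.le (by linarith)
        have h4 : 0 < T ^ (-η) := by positivity
        rcases le_or_gt (T * s) 1 with h' | h'
        · have j := i1 h'
          have j2 : (T * s) ^ δ ≤ 1 := Real.rpow_le_one hTs.le h' hδ.le
          have j3 : (T * s) ^ δ * (1 - s ^ δ)⁻¹ ≤ 1 * (1 - s ^ δ)⁻¹ := by gcongr
          have j4 : (1 - s ^ η)⁻¹ * (1 - s ^ η) ≤ (1 - s ^ η)⁻¹ * (1 - s ^ η * T ^ (-η)) := by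
            gcongr
            nlinarith
          nlinarith
        · have j := i2 h'
          have e1 : (T * s) ^ (-η) = T ^ (-η) * (s ^ η)⁻¹ := by
            rw [Real.mul_rpow hT.le hs0.le, Real.rpow_neg hs0.le]
          have e2 : s ^ η * (T * s) ^ (-η) = T ^ (-η) := by
            rw [e1]; field_simp
          rw [e2] at j
          have e3 : (1 - s ^ η)⁻¹ * (1 - s ^ η * T ^ (-η)) =
              (1 - s ^ η)⁻¹ * (1 - T ^ (-η)) + T ^ (-η) := by
            linear_combination T ^ (-η) * he
          linarith
  intro T hT
  have hip : 0 < (1 - s ^ δ)⁻¹ := inv_pos.2 (by linarith)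
  have hip2 : 0 < (1 - s ^ η)⁻¹ := inv_pos.2 (by linarith)
  rcases le_or_gt T 1 with h | h
  · refine ((key T hT).1 h).trans ?_
    have : T ^ δ ≤ 1 := Real.rpow_le_one hT.le h hδ.le
    nlinarith
  · refine ((key T hT).2 h).trans ?_
    have h4 : 0 < T ^ (-η) := by positivity
    have : (1 - s ^ η)⁻¹ * (1 - s ^ η * T ^ (-η)) ≤ (1 - s ^ η)⁻¹ * 1 := by
      gcongr
      nlinarith
    linarith

/-- average deviation -/
noncomputable def jdA {n : ℕ} (u : Eucl n → ℝ) (x a : Eucl n) (r : ℝ) : ℝ≥0∞ :=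
  (∫⁻ y in ball a r, ENNReal.ofReal |u x - u y|) / volume (ball a r)

noncomputable def jdTheta (n : ℕ) (δ p K E t : ℝ) : ℝ :=
  (t ^ (δ * p - n) * min (K * t ^ (n : ℝ)) E) ^ (1 / p)

noncomputable def jdC1 (n : ℕ) (ε : ℝ) : ℝ :=
  1 + 1 / (jdw n ^ 2 * ε ^ (2 * n) * (1 - ε) ^ n)

lemma jd_chain_step {n : ℕ} {c τ δ p ε : ℝ} (hc : 1 ≤ c) (hτ0 : 0 < τ) (hτ1 : τ < 1)
    (hδ : 0 < δ) (hp : 1 ≤ p) (hε : ε = τ / (5 * c)) {D : Set (Eucl n)} (hD : IsOpen D)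
    {u : Eucl n → ℝ} (hu : Measurable u) {x a b : Eucl n} {t : ℝ} (ht : 0 < t)
    (ha : a ∈ D) (hxa : dist x a ≤ t) (hab : dist a b ≤ ε * t)
    (hda : t / c ≤ infDist a (frontier D))
    {K E : ℝ} (hK0 : 0 < K) (hE0 : 0 < E)
    (hE : ∫⁻ z in D, jdG n δ τ p D u z ≤ ENNReal.ofReal E)
    (hK : ∫⁻ z in closedBall x (2 * t) ∩ D, jdG n δ τ p D u z ≤ ENNReal.ofReal (K * t ^ (n : ℝ))) :
    jdA u x a (ε * t) ≤ jdA u x b (ε * ((1 - ε) * t)) +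
      ENNReal.ofReal (jdC1 n ε * jdTheta n δ p K E t) := by
  have hε0 : 0 < ε := by rw [hε]; positivity
  have hcε : 5 * (c * ε) = τ := by rw [hε]; field_simp
  have hε5 : 5 * ε < 1 := by nlinarith
  have hs0 : 0 < 1 - ε := by linarith
  have hcl : 5 * ε * t = τ * (t / c) := by rw [hε]; field_simp
  have htc : ε * t < t / c := by
    have : 0 < t / c := by positivity
    nlinarith
  have hθ : 0 < jdTheta n δ p K E t := by unfold jdTheta; positivity
  have hp0 : 0 < p := by linarith
  have hw := jdw_pos n
  have hA := jd_vol_ball a (mul_pos hε0 ht)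
  have hB := jd_vol_ball b (mul_pos hε0 (mul_pos hs0 ht))
  have hAD : ball a (ε * t) ⊆ closedBall x (2 * t) ∩ D := by
    intro z hz
    refine ⟨?_, jd_ball_sub hD ha (htc.le.trans hda) hz⟩
    have h1 : dist z a < ε * t := hz
    have h2 := dist_triangle z a x
    rw [dist_comm a x] at h2
    rw [mem_closedBall]
    nlinarith
  have hdist : ∀ z ∈ ball a (ε * t), ∀ y ∈ ball b (ε * ((1 - ε) * t)), dist z y ≤ 3 * ε * t := by
    intro z hz y hy
    have h1 : dist z a < ε * t := hz
    have h2 : dist y b < ε * ((1 - ε) * t) := hy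
    have h3 := dist_triangle4 z a b y
    rw [dist_comm b y] at h3
    have : ε * ((1 - ε) * t) ≤ ε * t := by
      have : 0 < ε * t := by positivity
      nlinarith
    linarith
  have hstep := jd_step hp hδ (τ := τ) (D := D) hu (x := x) (A := ball a (ε * t))
    (B := ball b (ε * ((1 - ε) * t))) (S := closedBall x (2 * t) ∩ D) measurableSet_ball
    measurableSet_ball (measure_ball_pos _ _ (by positivity)).ne'
    (measure_ball_pos _ _ (by positivity)).ne' measure_ball_lt_top.ne measure_ball_lt_top.ne
    hAD (by
      intro z hz y hy
      have h1 : dist z a < ε * t := hz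
      have h2 := hdist z hz y hy
      have h3 : infDist a (frontier D) ≤ infDist z (frontier D) + dist a z :=
        infDist_le_infDist_add_dist
      rw [dist_comm] at h3
      show edist z y < ENNReal.ofReal τ * infEDist z (frontier D)
      have h4 : ENNReal.ofReal (infDist z (frontier D)) ≤ infEDist z (frontier D) :=
        ENNReal.ofReal_toReal_le
      refine lt_of_lt_of_le ?_ (mul_le_mul' le_rfl h4)
      rw [edist_dist, ← ENNReal.ofReal_mul hτ0.le]
      have hpos : 0 < t / c := by positivity
      have h5 : 3 * ε * t < τ * infDist z (frontier D) := by
        have : τ * (t / c - ε * t) ≤ τ * infDist z (frontier D) := by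
          gcongr; linarith
        have h6 : τ * (ε * t) < 1 * (ε * t) := by gcongr
        nlinarith
      rw [ENNReal.ofReal_lt_ofReal_iff]
      · linarith
      · have : 0 < ε * t := by positivity
        linarith) hθ hdist
  unfold jdA
  refine hstep.trans ?_
  rw [add_assoc]
  refine add_le_add le_rfl ?_
  set m := min (K * t ^ (n : ℝ)) E with hm
  have hm0 : 0 < m := by positivity
  have hS : ∫⁻ z in closedBall x (2 * t) ∩ D, jdG n δ τ p D u z ≤ ENNReal.ofReal m := by
    rw [hm, ENNReal.ofReal_min]
    exact le_min hK ((lintegral_mono_set inter_subset_right).trans hE)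
  set θ := jdTheta n δ p K E t with hθd
  have hθp : θ ^ p = t ^ (δ * p - n) * m := by
    rw [hθd, jdTheta, ← hm, ← Real.rpow_mul (by positivity)]
    rw [one_div, inv_mul_cancel₀ hp0.ne', Real.rpow_one]
  have hreal : θ ^ (1 - p) * (3 * ε * t) ^ ((n : ℝ) + δ * p) * m /
      (jdw n * (ε * t) ^ n * (jdw n * (ε * ((1 - ε) * t)) ^ n)) ≤
      1 / (jdw n ^ 2 * ε ^ (2 * n) * (1 - ε) ^ n) * θ := by
    have r1 : (3 * ε * t) ^ ((n : ℝ) + δ * p) ≤ t ^ ((n : ℝ) + δ * p) := by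
      apply Real.rpow_le_rpow (by positivity) _ (by positivity)
      nlinarith
    have r2 : t ^ ((n : ℝ) + δ * p) = t ^ (2 * n) * t ^ (δ * p - n) := by
      rw [← Real.rpow_natCast, ← Real.rpow_add ht]
      congr 1
      push_cast
      ring
    have r3 : θ ^ (1 - p) * θ ^ p = θ := by
      rw [← Real.rpow_add hθ]; simp
    have r4 : jdw n * (ε * t) ^ n * (jdw n * (ε * ((1 - ε) * t)) ^ n) =
        (jdw n ^ 2 * ε ^ (2 * n) * (1 - ε) ^ n) * t ^ (2 * n) := by
      simp only [mul_pow, pow_mul']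
      ring
    rw [r4, div_le_iff₀ (by positivity)]
    calc θ ^ (1 - p) * (3 * ε * t) ^ ((n : ℝ) + δ * p) * m
        ≤ θ ^ (1 - p) * (t ^ (2 * n) * t ^ (δ * p - n)) * m := by
          rw [← r2]; gcongr
      _ = (θ ^ (1 - p) * θ ^ p) * t ^ (2 * n) := by rw [hθp]; ring
      _ = θ * t ^ (2 * n) := by rw [r3]
      _ = _ := by
        field_simp
  have hfin : ENNReal.ofReal (θ ^ (1 - p) * (3 * ε * t) ^ ((n : ℝ) + δ * p)) *
      (∫⁻ z in closedBall x (2 * t) ∩ D, jdG n δ τ p D u z) /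
        (volume (ball a (ε * t)) * volume (ball b (ε * ((1 - ε) * t)))) ≤
      ENNReal.ofReal (1 / (jdw n ^ 2 * ε ^ (2 * n) * (1 - ε) ^ n) * θ) := by
    refine le_trans ?_ (ENNReal.ofReal_le_ofReal hreal)
    rw [ENNReal.ofReal_div_of_pos (by positivity), ENNReal.ofReal_mul (p := _ * _) (by positivity),
      hA, hB, ← ENNReal.ofReal_mul (by positivity)]
    gcongr
  calc _ ≤ ENNReal.ofReal θ + ENNReal.ofReal (1 / (jdw n ^ 2 * ε ^ (2 * n) * (1 - ε) ^ n) * θ) :=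
        add_le_add le_rfl hfin
    _ = _ := by
      rw [← ENNReal.ofReal_add hθ.le (by positivity), jdC1]
      congr 1
      ring

open MeasureTheory Metric Set
open scoped ENNReal NNReal BigOperators

lemma jd_theta_le {n : ℕ} {δ p K E ρ t : ℝ} (hp : 1 ≤ p) (hK : 0 < K) (hρ : 0 < ρ) (ht : 0 < t)
    (hE : E = K * ρ ^ (n : ℝ)) :
    jdTheta n δ p K E t ≤ K ^ (1 / p) * ρ ^ δ *
      min ((t / ρ) ^ δ) ((t / ρ) ^ (-((n : ℝ) / p - δ))) := by
  have hp0 : 0 < p := by linarith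
  have hE0 : 0 < E := by rw [hE]; positivity
  rw [mul_min_of_nonneg _ _ (by positivity)]
  refine le_min ?_ ?_
  · calc jdTheta n δ p K E t ≤ (t ^ (δ * p - n) * (K * t ^ (n : ℝ))) ^ (1 / p) := by
          unfold jdTheta
          gcongr
          exact min_le_left _ _
      _ = (K * t ^ (δ * p)) ^ (1 / p) := by
          congr 1
          rw [mul_left_comm, ← Real.rpow_add ht]
          congr 2
          ring
      _ = K ^ (1 / p) * t ^ δ := by
          rw [Real.mul_rpow hK.le (by positivity), ← Real.rpow_mul ht.le]
          congr 2
          field_simp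
      _ = _ := by
          rw [Real.div_rpow ht.le hρ.le]
          field_simp
  · calc jdTheta n δ p K E t ≤ (t ^ (δ * p - n) * (K * ρ ^ (n : ℝ))) ^ (1 / p) := by
          unfold jdTheta
          gcongr
          rw [← hE]
          exact min_le_right _ _
      _ = K ^ (1 / p) * (t ^ (-((n : ℝ) / p - δ)) * ρ ^ ((n : ℝ) / p)) := by
          rw [mul_left_comm, Real.mul_rpow hK.le (by positivity),
            Real.mul_rpow (by positivity) (by positivity), ← Real.rpow_mul ht.le,
            ← Real.rpow_mul hρ.le]
          congr 3
          · field_simp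
            ring
          · ring
      _ = _ := by
          rw [Real.div_rpow ht.le hρ.le, Real.rpow_neg hρ.le, div_inv_eq_mul]
          have : ρ ^ ((n : ℝ) / p) = ρ ^ δ * ρ ^ ((n : ℝ) / p - δ) := by
            rw [← Real.rpow_add hρ]
            congr 1
            ring
          rw [this]
          ring

lemma jd_small {n : ℕ} {δ τ p ε : ℝ} (hε0 : 0 < ε) (hε1 : ε ≤ 1)
    (hδ : 0 < δ) (hp : 1 ≤ p) {D : Set (Eucl n)}
    {u : Eucl n → ℝ} (hu : Measurable u) {x a : Eucl n} {t r : ℝ} (ht : 0 < t)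
    (hr : ball x r ⊆ tauBall n τ D x) (htr : 2 * t < r) (hxa : dist x a ≤ t) :
    jdA u x a (ε * t) ≤ ENNReal.ofReal (t ^ δ) * (1 +
      ENNReal.ofReal (2 ^ ((n : ℝ) + δ * p) / (jdw n * ε ^ n)) * jdG n δ τ p D u x) := by
  have hw := jdw_pos n
  have hd : ∀ y ∈ ball a (ε * t), dist x y ≤ 2 * t := by
    intro y hy
    have h1 : dist y a < ε * t := hy
    have h2 := dist_triangle x a y
    rw [dist_comm a y] at h2
    nlinarith
  have h := jd_int_point (τ := τ) (D := D) hp hδ hu (x := x) (B := ball a (ε * t))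
    measurableSet_ball (fun y hy => hr (by
      have := hd y hy
      rw [mem_ball, dist_comm]; linarith)) (θ := t ^ δ) (by positivity) hd
  unfold jdA
  rw [ENNReal.div_le_iff (measure_ball_pos _ _ (by positivity)).ne' measure_ball_lt_top.ne]
  refine h.trans (le_of_eq ?_)
  rw [jd_vol_ball a (by positivity : 0 < ε * t)]
  rw [mul_add, add_mul, mul_one]
  congr 1
  rw [mul_comm _ (jdG n δ τ p D u x), ← mul_assoc, mul_comm _ (jdG n δ τ p D u x), mul_assoc,
    mul_assoc]
  congr 1
  rw [← ENNReal.ofReal_mul (by positivity), ← ENNReal.ofReal_mul (by positivity)]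
  congr 1
  have e1 : (t ^ δ) ^ (1 - p) * t ^ (δ * p) = t ^ δ := by
    rw [← Real.rpow_mul ht.le, ← Real.rpow_add ht]
    congr 1
    ring
  rw [Real.mul_rpow (by norm_num) ht.le, Real.rpow_add ht, Real.rpow_natCast, mul_pow]
  calc _ = ((t ^ δ) ^ (1 - p) * t ^ (δ * p)) * (2 ^ ((n : ℝ) + δ * p) * t ^ n) := by ring
    _ = _ := by
      rw [e1]
      field_simp

noncomputable def jdS (n : ℕ) (δ p ε : ℝ) : ℝ :=
  (1 - (1 - ε) ^ δ)⁻¹ + (1 - (1 - ε) ^ ((n : ℝ) / p - δ))⁻¹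

lemma jd_chain {n : ℕ} {c τ δ p ε : ℝ} (hc : 1 ≤ c) (hτ0 : 0 < τ) (hτ1 : τ < 1)
    (hδ : 0 < δ) (hp : 1 ≤ p) (hη : 0 < (n : ℝ) / p - δ) (hε : ε = τ / (5 * c))
    {D : Set (Eucl n)} (hD : IsOpen D)
    {u : Eucl n → ℝ} (hu : Measurable u) {x : Eucl n} (hx : x ∈ D) {L : ℝ} (hL : 0 < L)
    (h : ℝ → Eucl n) (h0 : h 0 = x) (hhD : ∀ t ∈ Icc 0 L, h t ∈ D)
    (hlip : ∀ t ∈ Icc 0 L, ∀ t' ∈ Icc 0 L, dist (h t) (h t') ≤ |t - t'|)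
    (hd : ∀ t ∈ Icc 0 L, t / c ≤ infDist (h t) (frontier D))
    (hG : jdG n δ τ p D u x < ⊤)
    {K E ρ : ℝ} (hK0 : 0 < K) (hρ : 0 < ρ) (hEρ : E = K * ρ ^ (n : ℝ))
    (hE : ∫⁻ z in D, jdG n δ τ p D u z ≤ ENNReal.ofReal E)
    (hK : ∀ t : ℝ, 0 < t →
      ∫⁻ z in closedBall x (2 * t) ∩ D, jdG n δ τ p D u z ≤ ENNReal.ofReal (K * t ^ (n : ℝ))) :
    jdA u x (h L) (ε * L) ≤
      ENNReal.ofReal (jdC1 n ε * (K ^ (1 / p) * ρ ^ δ * jdS n δ p ε)) := by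
  have hE0 : 0 < E := by rw [hEρ]; positivity
  have hε0 : 0 < ε := by rw [hε]; positivity
  have hcε : 5 * (c * ε) = τ := by rw [hε]; field_simp
  have hε5 : 5 * ε < 1 := by nlinarith
  have hs0 : 0 < 1 - ε := by linarith
  have hs1 : 1 - ε < 1 := by linarith
  have hw := jdw_pos n
  have hC1 : 0 < jdC1 n ε := by unfold jdC1; positivity
  set t : ℕ → ℝ := fun k => L * (1 - ε) ^ k with htdef
  have ht0 : ∀ k, 0 < t k := fun k => by positivity
  have htL : ∀ k, t k ≤ L := fun k => by
    have : (1 - ε) ^ k ≤ 1 := pow_le_one₀ hs0.le hs1.le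
    simp only [htdef]; nlinarith
  have hmem : ∀ k, t k ∈ Icc 0 L := fun k => ⟨(ht0 k).le, htL k⟩
  have htx : ∀ k, dist x (h (t k)) ≤ t k := fun k => by
    have := hlip 0 ⟨le_rfl, hL.le⟩ (t k) (hmem k)
    rw [h0, zero_sub, abs_neg, abs_of_pos (ht0 k)] at this
    exact this
  have hts : ∀ k, t (k + 1) = (1 - ε) * t k := fun k => by
    simp only [htdef, pow_succ]; ring
  have hθ0 : ∀ k, 0 < jdTheta n δ p K E (t k) := fun k => by
    have := ht0 k
    unfold jdTheta; positivity
  have hstep : ∀ k, jdA u x (h (t k)) (ε * t k) ≤ jdA u x (h (t (k + 1))) (ε * t (k + 1)) +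
      ENNReal.ofReal (jdC1 n ε * jdTheta n δ p K E (t k)) := by
    intro k
    have := jd_chain_step (b := h (t (k + 1))) hc hτ0 hτ1 hδ hp hε hD hu (ht0 k) (hhD _ (hmem k)) (htx k)
      (by
        refine (hlip _ (hmem k) _ (hmem (k + 1))).trans ?_
        rw [hts, abs_of_nonneg]
        · apply le_of_eq; ring
        · have := ht0 k
          nlinarith) (hd _ (hmem k)) hK0 hE0 hE (hK _ (ht0 k))
    rw [← hts] at this
    exact this
  have hN : ∀ N, jdA u x (h L) (ε * L) ≤ jdA u x (h (t N)) (ε * t N) +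
      ENNReal.ofReal (jdC1 n ε * ∑ k ∈ Finset.range N, jdTheta n δ p K E (t k)) := by
    intro N
    induction N with
    | zero => simp [htdef]
    | succ N ih =>
      refine ih.trans ?_
      rw [Finset.sum_range_succ, mul_add, ENNReal.ofReal_add, add_comm (ENNReal.ofReal _), ← add_assoc]
      · gcongr
        exact hstep N
      · exact mul_nonneg hC1.le (Finset.sum_nonneg fun k _ => (hθ0 k).le)
      · exact mul_nonneg hC1.le (hθ0 N).le
  have hsum : ∀ N, ∑ k ∈ Finset.range N, jdTheta n δ p K E (t k) ≤
      K ^ (1 / p) * ρ ^ δ * jdS n δ p ε := by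
    intro N
    calc _ ≤ ∑ k ∈ Finset.range N, K ^ (1 / p) * ρ ^ δ *
          min ((L / ρ * (1 - ε) ^ k) ^ δ) ((L / ρ * (1 - ε) ^ k) ^ (-((n : ℝ) / p - δ))) := by
          refine Finset.sum_le_sum fun k _ => ?_
          have := jd_theta_le (δ := δ) hp hK0 hρ (ht0 k) hEρ
          have e : t k / ρ = L / ρ * (1 - ε) ^ k := by simp only [htdef]; ring
          rw [e] at this
          exact this
      _ ≤ _ := by
          rw [← Finset.mul_sum]
          gcongr
          exact jd_geom hs0 hs1 hδ hη N _ (by positivity)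
  -- small ball around `x`
  have hfne : (frontier D).Nonempty := by
    by_contra hne
    rw [not_nonempty_iff_eq_empty] at hne
    have := hd L ⟨hL.le, le_rfl⟩
    rw [hne, infDist_empty] at this
    have : 0 < L / c := by positivity
    linarith
  have hdx : 0 < infDist x (frontier D) := by
    rw [← isClosed_frontier.notMem_iff_infDist_pos hfne]
    intro hxf
    exact (hD.inter_frontier_eq ▸ (⟨hx, hxf⟩ : x ∈ D ∩ frontier D) : x ∈ (∅ : Set _))
  have hball : ball x (τ * infDist x (frontier D)) ⊆ tauBall n τ D x := by
    intro y hy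
    rw [mem_ball, dist_comm] at hy
    show edist x y < ENNReal.ofReal τ * infEDist x (frontier D)
    have h4 : ENNReal.ofReal (infDist x (frontier D)) ≤ infEDist x (frontier D) :=
      ENNReal.ofReal_toReal_le
    refine lt_of_lt_of_le ?_ (mul_le_mul' le_rfl h4)
    rw [edist_dist, ← ENNReal.ofReal_mul hτ0.le, ENNReal.ofReal_lt_ofReal_iff (by positivity)]
    exact hy
  have htt : Filter.Tendsto t Filter.atTop (nhds 0) := by
    have := (tendsto_pow_atTop_nhds_zero_of_lt_one hs0.le hs1).const_mul L
    simpa using this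
  have hlim : Filter.Tendsto (fun N => ENNReal.ofReal (t N ^ δ) * (1 +
      ENNReal.ofReal (2 ^ ((n : ℝ) + δ * p) / (jdw n * ε ^ n)) * jdG n δ τ p D u x))
      Filter.atTop (nhds 0) := by
    have h1 : Filter.Tendsto (fun N => t N ^ δ) Filter.atTop (nhds 0) := by
      have := htt.rpow_const (p := δ) (Or.inr hδ.le)
      rwa [Real.zero_rpow hδ.ne'] at this
    have h2 := ENNReal.tendsto_ofReal h1
    have h3 := ENNReal.Tendsto.mul_const (b := 1 +
      ENNReal.ofReal (2 ^ ((n : ℝ) + δ * p) / (jdw n * ε ^ n)) * jdG n δ τ p D u x) h2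
      (Or.inr (ENNReal.add_ne_top.2 ⟨ENNReal.one_ne_top,
        ENNReal.mul_ne_top ENNReal.ofReal_ne_top hG.ne⟩))
    simpa using h3
  have hlim2 := hlim.add_const
    (ENNReal.ofReal (jdC1 n ε * (K ^ (1 / p) * ρ ^ δ * jdS n δ p ε)))
  rw [zero_add] at hlim2
  refine ge_of_tendsto hlim2 ?_
  have hev : ∀ᶠ N in Filter.atTop, t N < τ * infDist x (frontier D) / 2 :=
    htt.eventually_lt_const (by positivity)
  filter_upwards [hev] with N hNN
  refine (hN N).trans ?_
  refine add_le_add ?_ ?_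
  · exact jd_small hε0 (by linarith) hδ hp hu (ht0 N) hball (by linarith) (htx N)
  · apply ENNReal.ofReal_le_ofReal
    gcongr
    exact hsum N

open MeasureTheory Metric Set
open scoped ENNReal NNReal BigOperators

lemma jd_weak {n : ℕ} (hn : 2 ≤ n) {D : Set (Eucl n)} (hD : IsOpen D) {f : Eucl n → ℝ≥0∞}
    {K E ρ : ℝ} (hK0 : 0 < K) (hρ : 0 < ρ) (hEρ : E = K * ρ ^ (n : ℝ))
    (hE : ∫⁻ z in D, f z ≤ ENNReal.ofReal E) :
    volume {x | ∃ t : ℝ, 0 < t ∧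
      ENNReal.ofReal (K * t ^ (n : ℝ)) < ∫⁻ z in closedBall x (2 * t) ∩ D, f z} ≤
      ENNReal.ofReal (jdw n * 10 ^ n / K * E) := by
  have hw := jdw_pos n
  have hE0 : 0 < E := by rw [hEρ]; positivity
  set Bad := {x | ∃ t : ℝ, 0 < t ∧
      ENNReal.ofReal (K * t ^ (n : ℝ)) < ∫⁻ z in closedBall x (2 * t) ∩ D, f z} with hBad
  have hch : ∀ x : Eucl n, ∃ t : ℝ, x ∈ Bad → 0 < t ∧
      ENNReal.ofReal (K * t ^ (n : ℝ)) < ∫⁻ z in closedBall x (2 * t) ∩ D, f z := by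
    intro x
    by_cases h : x ∈ Bad
    · obtain ⟨t, ht⟩ := h
      exact ⟨t, fun _ => ht⟩
    · exact ⟨0, fun h' => absurd h' h⟩
  choose t ht using hch
  have hbd : ∀ x ∈ Bad, 2 * t x ≤ 2 * ρ := by
    intro x hx
    obtain ⟨h1, h2⟩ := ht x hx
    have h3 : ENNReal.ofReal (K * t x ^ (n : ℝ)) < ENNReal.ofReal E :=
      h2.trans_le ((lintegral_mono_set inter_subset_right).trans hE)
    rw [ENNReal.ofReal_lt_ofReal_iff hE0, hEρ] at h3
    have h4 : t x ^ (n : ℝ) < ρ ^ (n : ℝ) := lt_of_mul_lt_mul_left h3 hK0.le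
    have h5 : t x < ρ := (Real.rpow_lt_rpow_iff h1.le hρ.le
      (by exact_mod_cast (by omega : 0 < n))).1 h4
    linarith
  obtain ⟨v, hvB, hvd, hvc⟩ := Vitali.exists_disjoint_subfamily_covering_enlargement_closedBall
    Bad (fun x => x) (fun x => 2 * t x) (2 * ρ) hbd 5 (by norm_num)
  have hvcount : v.Countable := by
    refine hvd.countable_of_nonempty_interior fun x hx => ⟨x, ?_⟩
    have := (ht x (hvB hx)).1
    exact ball_subset_interior_closedBall (mem_ball_self (by linarith))
  have hcov : Bad ⊆ ⋃ b ∈ v, closedBall b (5 * (2 * t b)) := by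
    intro x hx
    obtain ⟨b, hb, hsub⟩ := hvc x hx
    have := (ht x hx).1
    exact mem_biUnion hb (hsub (mem_closedBall_self (by linarith)))
  calc volume Bad ≤ volume (⋃ b ∈ v, closedBall b (5 * (2 * t b))) := measure_mono hcov
    _ ≤ ∑' b : v, volume (closedBall (b : Eucl n) (5 * (2 * t b))) := measure_biUnion_le _ hvcount _
    _ ≤ ∑' b : v, ENNReal.ofReal (jdw n * 10 ^ n / K) *
          ∫⁻ z in closedBall (b : Eucl n) (2 * t b) ∩ D, f z := by
        refine ENNReal.tsum_le_tsum fun b => ?_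
        obtain ⟨h1, h2⟩ := ht b (hvB b.2)
        rw [jd_vol_cball _ (by positivity)]
        refine le_trans (le_of_eq ?_) (mul_le_mul' le_rfl h2.le)
        rw [← ENNReal.ofReal_mul (by positivity)]
        congr 1
        rw [Real.rpow_natCast]
        have : 5 * (2 * t b) = 10 * t b := by ring
        rw [this, mul_pow]
        field_simp
    _ = ENNReal.ofReal (jdw n * 10 ^ n / K) *
          ∫⁻ z in ⋃ b ∈ v, (closedBall b (2 * t b) ∩ D), f z := by
        rw [ENNReal.tsum_mul_left, lintegral_biUnion hvcount
          (fun b _ => measurableSet_closedBall.inter hD.measurableSet)]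
        intro a ha b hb hab
        exact (hvd ha hb hab).mono inter_subset_left inter_subset_left
    _ ≤ ENNReal.ofReal (jdw n * 10 ^ n / K) * ENNReal.ofReal E := by
        gcongr
        refine (lintegral_mono_set ?_).trans hE
        exact iUnion₂_subset fun b _ => inter_subset_right
    _ = _ := by rw [← ENNReal.ofReal_mul (by positivity)]

lemma jd_two_A {n : ℕ} {u : Eucl n → ℝ} (hu : Measurable u) {x y a : Eucl n} {r : ℝ} (hr : 0 < r) :
    ENNReal.ofReal |u x - u y| ≤ jdA u x a r + jdA u y a r := by
  unfold jdA
  rw [← ENNReal.add_div, ENNReal.le_div_iff_mul_le (Or.inl (measure_ball_pos _ _ hr).ne')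
    (Or.inl measure_ball_lt_top.ne)]
  have hm : Measurable (fun z => ENNReal.ofReal |u x - u z|) := by fun_prop
  rw [← lintegral_add_left hm]
  calc ENNReal.ofReal |u x - u y| * volume (ball a r) = ∫⁻ z in ball a r, ENNReal.ofReal |u x - u y| := by
        simp
    _ ≤ _ := by
      refine lintegral_mono fun z => ?_
      rw [← ENNReal.ofReal_add (abs_nonneg _) (abs_nonneg _)]
      apply ENNReal.ofReal_le_ofReal
      rw [abs_sub_comm (u y)]
      exact abs_sub_le _ _ _

lemma jd_two {n : ℕ} {c τ δ p ε : ℝ} (hc : 1 ≤ c) (hτ0 : 0 < τ) (hτ1 : τ < 1)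
    (hδ : 0 < δ) (hp : 1 ≤ p) (hη : 0 < (n : ℝ) / p - δ) (hε : ε = τ / (5 * c))
    {D : Set (Eucl n)} (hD : IsJohnDomain n c D)
    {u : Eucl n → ℝ} (hu : Measurable u) {x y : Eucl n} (hx : x ∈ D) (hy : y ∈ D)
    (hGx : jdG n δ τ p D u x < ⊤) (hGy : jdG n δ τ p D u y < ⊤)
    {K E ρ M : ℝ} (hK0 : 0 < K) (hρ : 0 < ρ) (hEρ : E = K * ρ ^ (n : ℝ))
    (hM : M = jdC1 n ε * (K ^ (1 / p) * ρ ^ δ * jdS n δ p ε)) (hM0 : 0 ≤ M)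
    (hE : ∫⁻ z in D, jdG n δ τ p D u z ≤ ENNReal.ofReal E)
    (hKx : ∀ t : ℝ, 0 < t →
      ∫⁻ z in closedBall x (2 * t) ∩ D, jdG n δ τ p D u z ≤ ENNReal.ofReal (K * t ^ (n : ℝ)))
    (hKy : ∀ t : ℝ, 0 < t →
      ∫⁻ z in closedBall y (2 * t) ∩ D, jdG n δ τ p D u z ≤ ENNReal.ofReal (K * t ^ (n : ℝ))) :
    |u x - u y| ≤ 2 * M := by
  obtain ⟨ho, -, hJ⟩ := hD
  obtain ⟨ℓ, hℓ, γ, g0, g1, gD, glip, gd⟩ := hJ x hx y hy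
  rcases hℓ.eq_or_lt with h | h
  · rw [← h, g0] at g1
    rw [g1]; simpa using hM0
  have hε0 : 0 < ε := by rw [hε]; positivity
  have hL : 0 < ℓ / 2 := by positivity
  have hl : ∀ t ∈ Icc 0 ℓ, ∀ t' ∈ Icc 0 ℓ, dist (γ t) (γ t') ≤ |t - t'| := by
    intro t ht t' ht'
    have := glip.dist_le_mul t ht t' ht'
    simpa [Real.dist_eq] using this
  have e1 := jd_chain hc hτ0 hτ1 hδ hp hη hε ho hu hx hL γ g0
    (fun t ht => gD t ⟨ht.1, by linarith [ht.2]⟩)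
    (fun t ht t' ht' => hl t ⟨ht.1, by linarith [ht.2]⟩ t' ⟨ht'.1, by linarith [ht'.2]⟩)
    (fun t ht => by
      have := gd t ⟨ht.1, by linarith [ht.2]⟩
      rwa [min_eq_left (by linarith [ht.2])] at this) hGx hK0 hρ hEρ hE hKx
  have e2 := jd_chain hc hτ0 hτ1 hδ hp hη hε ho hu hy hL (fun t => γ (ℓ - t)) (by simpa using g1)
    (fun t ht => gD (ℓ - t) ⟨by linarith [ht.2], by linarith [ht.1]⟩)
    (fun t ht t' ht' => by
      have := hl (ℓ - t) ⟨by linarith [ht.2], by linarith [ht.1]⟩ (ℓ - t')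
        ⟨by linarith [ht'.2], by linarith [ht'.1]⟩
      rw [show ℓ - t - (ℓ - t') = -(t - t') by ring, abs_neg] at this
      exact this)
    (fun t ht => by
      have := gd (ℓ - t) ⟨by linarith [ht.2], by linarith [ht.1]⟩
      rwa [show ℓ - (ℓ - t) = t by ring, min_eq_right (by linarith [ht.2])] at this)
    hGy hK0 hρ hEρ hE hKy
  have e3 : ℓ - ℓ / 2 = ℓ / 2 := by ring
  simp only [e3] at e2
  rw [← hM] at e1 e2
  have := (jd_two_A hu (x := x) (y := y) (a := γ (ℓ / 2)) (r := ε * (ℓ / 2))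
    (by positivity)).trans (add_le_add e1 e2)
  rw [← ENNReal.ofReal_add hM0 hM0, ENNReal.ofReal_le_ofReal_iff (by positivity)] at this
  linarith

/-- Key two-point weak-type estimate. -/
lemma jd_key (n : ℕ) (hn : 2 ≤ n) (c : ℝ) (hc : 1 ≤ c)
    (τ δ p : ℝ) (hτ : τ ∈ Ioo (0:ℝ) 1) (hδ : δ ∈ Ioo (0:ℝ) 1)
    (hp : 1 ≤ p) (hpn : p < n / δ) :
    ∃ C : ℝ, 0 < C ∧ ∀ D : Set (Eucl n), IsJohnDomain n c D →
      ∀ u : Eucl n → ℝ, Measurable u → ∀ E : ℝ, 0 < E →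
      fracEnergyTau n δ τ p D u ≤ ENNReal.ofReal E →
      ∀ lam : ℝ, 0 < lam → ∃ Bad : Set (Eucl n),
        volume Bad ≤ ENNReal.ofReal (C * (lam ^ (-((n:ℝ) * p / ((n:ℝ) - δ * p))) *
          E ^ ((n:ℝ) / ((n:ℝ) - δ * p)))) ∧
        ∀ x ∈ D, x ∉ Bad → ∀ y ∈ D, y ∉ Bad → |u x - u y| ≤ lam := by
  obtain ⟨hτ0, hτ1⟩ := hτ
  obtain ⟨hδ0, hδ1⟩ := hδ
  have hp0 : 0 < p := by linarith
  have hn0 : (0 : ℝ) < n := by exact_mod_cast (by omega : 0 < n)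
  have hnp : 0 < (n : ℝ) - δ * p := by
    rw [lt_div_iff₀ hδ0] at hpn; linarith
  have hη : 0 < (n : ℝ) / p - δ := by
    rw [sub_pos, lt_div_iff₀ hp0]; linarith
  have hw := jdw_pos n
  set ε := τ / (5 * c) with hε
  have hε0 : 0 < ε := by positivity
  have hcε : 5 * (c * ε) = τ := by rw [hε]; field_simp
  have hε5 : 5 * ε < 1 := by nlinarith
  have hs0 : 0 < 1 - ε := by linarith
  have hs1 : 1 - ε < 1 := by linarith
  have hC1 : 0 < jdC1 n ε := by unfold jdC1; positivity
  have hS : 0 < jdS n δ p ε := by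
    have a1 : (1 - ε) ^ δ < 1 := Real.rpow_lt_one hs0.le hs1 hδ0
    have a2 : (1 - ε) ^ ((n : ℝ) / p - δ) < 1 := Real.rpow_lt_one hs0.le hs1 hη
    have b1 : 0 < 1 - (1 - ε) ^ δ := by linarith
    have b2 : 0 < 1 - (1 - ε) ^ ((n : ℝ) / p - δ) := by linarith
    unfold jdS
    positivity
  set q := (n:ℝ) * p / ((n:ℝ) - δ * p) with hq
  have hq0 : 0 < q := by positivity
  set B := 2 * jdC1 n ε * jdS n δ p ε with hB
  have hB0 : 0 < B := by positivity
  refine ⟨jdw n * 10 ^ n * B ^ q, by positivity, ?_⟩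
  intro D hJ u hu E hE0 hE lam hlam
  set K := (lam / B) ^ q * E ^ (-(δ * q / n)) with hK
  have hK0 : 0 < K := by positivity
  set ρ := (E / K) ^ (1 / (n : ℝ)) with hρd
  have hρ0 : 0 < ρ := by positivity
  have hEρ : E = K * ρ ^ (n : ℝ) := by
    rw [hρd, ← Real.rpow_mul (by positivity), one_div, inv_mul_cancel₀ hn0.ne', Real.rpow_one]
    field_simp
  have hE' : ∫⁻ z in D, jdG n δ τ p D u z ≤ ENNReal.ofReal E := hE
  have hH : K ^ (1 / p) * ρ ^ δ = lam / B := by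
    rw [hρd, ← Real.rpow_mul (by positivity), Real.div_rpow hE0.le hK0.le, mul_div_assoc',
      mul_comm (K ^ (1/p)), mul_div_assoc, ← Real.rpow_sub hK0, hK,
      Real.mul_rpow (by positivity) (by positivity), ← Real.rpow_mul (by positivity),
      ← Real.rpow_mul hE0.le, mul_left_comm, ← Real.rpow_add hE0]
    have e1 : q * (1 / p - 1 / (n : ℝ) * δ) = 1 := by
      have hne : (n : ℝ) - p * δ ≠ 0 := by rw [mul_comm p]; exact hnp.ne'
      rw [hq]; field_simp
    have e2 : 1 / (n : ℝ) * δ + -(δ * q / n) * (1 / p - 1 / (n : ℝ) * δ) = 0 := by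
      have : -(δ * q / n) * (1 / p - 1 / (n : ℝ) * δ) =
        -(δ / n) * (q * (1 / p - 1 / (n : ℝ) * δ)) := by ring
      rw [this, e1]; ring
    rw [e1, e2]; simp
  refine ⟨{x | ∃ t : ℝ, 0 < t ∧
      ENNReal.ofReal (K * t ^ (n : ℝ)) < ∫⁻ z in closedBall x (2 * t) ∩ D, jdG n δ τ p D u z} ∪
      {x | ¬ (x ∈ D → jdG n δ τ p D u x < ⊤)}, ?_, ?_⟩
  · have hae : ∀ᵐ x ∂volume, x ∈ D → jdG n δ τ p D u x < ⊤ := by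
      rw [← ae_restrict_iff' hJ.1.measurableSet]
      exact ae_lt_top (jdG_meas hu) (hE'.trans_lt ENNReal.ofReal_lt_top).ne
    have h0 : volume {x | ¬ (x ∈ D → jdG n δ τ p D u x < ⊤)} = 0 := hae
    refine (measure_union_le _ _).trans ?_
    rw [h0, add_zero]
    refine (jd_weak hn hJ.1 hK0 hρ0 hEρ hE').trans (le_of_eq ?_)
    congr 1
    rw [hK, Real.div_rpow hlam.le hB0.le, Real.rpow_neg hlam.le, Real.rpow_neg hE0.le]
    have : E ^ ((n:ℝ) / ((n:ℝ) - δ * p)) = E * E ^ (δ * q / n) := by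
      nth_rewrite 2 [← Real.rpow_one E]
      rw [← Real.rpow_add hE0]
      congr 1
      rw [hq]; field_simp; ring
    rw [this]
    field_simp
  · intro x hx hxB y hy hyB
    simp only [mem_union, mem_ofPred_eq, not_or, not_exists, not_and, not_not, not_lt] at hxB hyB
    have := jd_two hc hτ0 hτ1 hδ0 hp hη hε hJ hu hx hy (hxB.2 hx) (hyB.2 hy) hK0 hρ0 hEρ rfl
      (by positivity) hE' hxB.1 hyB.1
    refine this.trans (le_of_eq ?_)
    rw [hH, hB]
    field_simp

open MeasureTheory Metric Set
open scoped ENNReal NNReal BigOperators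

lemma jd_contr {n : ℕ} {δ τ p : ℝ} (hp : 1 ≤ p) {D : Set (Eucl n)} {u w : Eucl n → ℝ}
    (h : ∀ x y, |w x - w y| ≤ |u x - u y|) :
    fracEnergyTau n δ τ p D w ≤ fracEnergyTau n δ τ p D u := by
  unfold fracEnergyTau
  refine lintegral_mono fun x => lintegral_mono fun y => ?_
  unfold fracKernel
  apply ENNReal.ofReal_le_ofReal
  have := h x y
  gcongr

lemma jd_tsum_rpow {ι : Type*} (f : ι → ℝ≥0∞) {p : ℝ} (hp : 1 ≤ p) :
    ∑' i, f i ^ p ≤ (∑' i, f i) ^ p := by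
  have hfin : ∀ s : Finset ι, ∑ i ∈ s, f i ^ p ≤ (∑ i ∈ s, f i) ^ p := by
    intro s
    classical
    induction s using Finset.induction_on with
    | empty => simp
    | insert a s ha ih =>
      rw [Finset.sum_insert ha, Finset.sum_insert ha]
      exact (add_le_add le_rfl ih).trans (ENNReal.add_rpow_le_rpow_add _ _ hp)
  rw [ENNReal.tsum_eq_iSup_sum]
  refine iSup_le fun s => (hfin s).trans ?_
  exact ENNReal.rpow_le_rpow (ENNReal.sum_le_tsum s) (by linarith)

/-- truncation between levels `2^k` and `2^(k+1)` -/
noncomputable def jdT (k : ℤ) (t : ℝ) : ℝ := min (max (t - 2 ^ k) 0) (2 ^ k)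

lemma jdT_sum (a b : ℝ) :
    ∑' k : ℤ, ENNReal.ofReal |jdT k a - jdT k b| ≤ ENNReal.ofReal |a - b| := by
  wlog hab : b ≤ a generalizing a b
  · have := this b a (le_of_not_ge hab)
    simp only [abs_sub_comm b a] at this
    refine le_trans (le_of_eq ?_) this
    congr 1
    funext k
    rw [abs_sub_comm]
  have h1 : ∀ k : ℤ, ENNReal.ofReal |jdT k a - jdT k b| =
      volume (Ioc b a ∩ Ioc ((2:ℝ) ^ k) (2 ^ (k + 1))) := by
    intro k
    have hk : (0:ℝ) < 2 ^ k := by positivity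
    have hk1 : (2:ℝ) ^ (k + 1) = 2 * 2 ^ k := by rw [zpow_add_one₀ (by norm_num)]; ring
    rw [Ioc_inter_Ioc, Real.volume_Ioc, hk1]
    unfold jdT
    generalize (2:ℝ) ^ k = s at hk
    have hmono : min (max (b - s) 0) s ≤ min (max (a - s) 0) s := by gcongr
    rw [abs_of_nonneg (by linarith)]
    rcases le_or_gt (min a (2 * s) - max b s) 0 with h | h
    · rw [ENNReal.ofReal_of_nonpos h]
      apply ENNReal.ofReal_of_nonpos
      simp only [min_def, max_def] at *
      split_ifs at * <;> linarith
    · congr 1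
      simp only [min_def, max_def] at *
      split_ifs at * <;> linarith
  simp_rw [h1]
  rw [← measure_iUnion, abs_of_nonneg (by linarith), ← Real.volume_Ioc]
  · exact measure_mono (iUnion_subset fun k => inter_subset_left)
  · have hm : Monotone (fun k : ℤ => (2:ℝ) ^ k) := zpow_right_mono₀ (by norm_num)
    intro i j hij
    exact (hm.pairwise_disjoint_on_Ioc_succ hij).mono inter_subset_right inter_subset_right
  · exact fun k => measurableSet_Ioc.inter measurableSet_Ioc

lemma jdT_meas (k : ℤ) : Measurable (jdT k) := by
  unfold jdT
  fun_prop

lemma jd_kernel_sum {n : ℕ} {δ p : ℝ} (hp : 1 ≤ p) {w : Eucl n → ℝ} (x y : Eucl n) :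
    ∑' k : ℤ, fracKernel n δ p (fun z => jdT k (w z)) x y ≤ fracKernel n δ p w x y := by
  have hp0 : 0 ≤ p := by linarith
  have e : ∀ v : Eucl n → ℝ, fracKernel n δ p v x y =
      ENNReal.ofReal |v x - v y| ^ p * ENNReal.ofReal ((dist x y ^ ((n : ℝ) + δ * p))⁻¹) := by
    intro v
    unfold fracKernel
    rw [div_eq_mul_inv, ENNReal.ofReal_mul (by positivity),
      ENNReal.ofReal_rpow_of_nonneg (abs_nonneg _) hp0]
  simp_rw [e]
  rw [ENNReal.tsum_mul_right]
  gcongr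
  exact (jd_tsum_rpow _ hp).trans (ENNReal.rpow_le_rpow (jdT_sum _ _) hp0)

lemma jd_energy_sum {n : ℕ} {δ τ p : ℝ} (hp : 1 ≤ p) {D : Set (Eucl n)} {w : Eucl n → ℝ}
    (hw : Measurable w) :
    ∑' k : ℤ, fracEnergyTau n δ τ p D (fun z => jdT k (w z)) ≤ fracEnergyTau n δ τ p D w := by
  have hm : ∀ k : ℤ, Measurable (fun z => jdT k (w z)) := fun k => (jdT_meas k).comp hw
  simp_rw [jd_energy_eq]
  rw [← lintegral_tsum fun k => (jdG_meas (hm k)).aemeasurable]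
  refine lintegral_mono fun x => ?_
  show ∑' k : ℤ, jdG n δ τ p D (fun z => jdT k (w z)) x ≤ jdG n δ τ p D w x
  unfold jdG
  rw [← lintegral_tsum]
  · exact lintegral_mono fun y => jd_kernel_sum hp x y
  · intro k
    have := hm k
    apply Measurable.aemeasurable
    unfold fracKernel
    fun_prop

lemma jd_limE {V e : ℝ≥0∞} {A r : ℝ} (hA : 0 ≤ A) (hr : 0 < r) (he : e ≠ ⊤)
    (h : ∀ E : ℝ, 0 < E → e ≤ ENNReal.ofReal E → V ≤ ENNReal.ofReal (A * E ^ r)) :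
    V ≤ ENNReal.ofReal A * e ^ r := by
  have h1 : Filter.Tendsto (fun k : ℕ => e.toReal + 1 / ((k : ℝ) + 1)) Filter.atTop
      (nhds (e.toReal + 0)) := tendsto_one_div_add_atTop_nhds_zero_nat.const_add _
  rw [add_zero] at h1
  have h2 : Filter.Tendsto (fun k : ℕ => ENNReal.ofReal (A * (e.toReal + 1 / ((k : ℝ) + 1)) ^ r))
      Filter.atTop (nhds (ENNReal.ofReal (A * e.toReal ^ r))) :=
    ENNReal.tendsto_ofReal ((h1.rpow_const (Or.inr hr.le)).const_mul A)
  have h3 : ENNReal.ofReal A * e ^ r = ENNReal.ofReal (A * e.toReal ^ r) := by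
    rw [ENNReal.ofReal_mul hA, ← ENNReal.ofReal_rpow_of_nonneg ENNReal.toReal_nonneg hr.le,
      ENNReal.ofReal_toReal he]
  rw [h3]
  refine ge_of_tendsto' h2 fun k => ?_
  have : (0:ℝ) < 1 / ((k : ℝ) + 1) := by positivity
  have h0 : 0 ≤ e.toReal := ENNReal.toReal_nonneg
  refine h _ (by positivity) ?_
  rw [← ENNReal.ofReal_toReal he]
  apply ENNReal.ofReal_le_ofReal
  rw [ENNReal.toReal_ofReal h0]
  linarith

/-- the key estimate as a predicate -/
def JdKey (n : ℕ) (δ τ p C q r : ℝ) (D : Set (Eucl n)) : Prop :=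
  ∀ u : Eucl n → ℝ, Measurable u → ∀ E : ℝ, 0 < E →
      fracEnergyTau n δ τ p D u ≤ ENNReal.ofReal E →
      ∀ lam : ℝ, 0 < lam → ∃ Bad : Set (Eucl n),
        volume Bad ≤ ENNReal.ofReal (C * (lam ^ (-q) * E ^ r)) ∧
        ∀ x ∈ D, x ∉ Bad → ∀ y ∈ D, y ∉ Bad → |u x - u y| ≤ lam

lemma jd_level {n : ℕ} {δ τ p C q r : ℝ} (hp : 1 ≤ p) (hC : 0 < C) (hr : 1 ≤ r)
    {D : Set (Eucl n)} (hkey : JdKey n δ τ p C q r D)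
    {w : Eucl n → ℝ} (hw : Measurable w)
    (hhalf : ∀ t : ℝ, 0 < t → volume D ≤ 2 * volume (D ∩ {x | w x ≤ t}))
    (hE : fracEnergyTau n δ τ p D w < ⊤) (k : ℤ) :
    volume (D ∩ {x | (2:ℝ) ^ (k + 1) < w x}) ≤
      ENNReal.ofReal (2 * C * ((2:ℝ) ^ k / 2) ^ (-q)) *
        fracEnergyTau n δ τ p D (fun z => jdT k (w z)) ^ r := by
  have hk : (0:ℝ) < 2 ^ k := by positivity
  have hk1 : (2:ℝ) ^ (k + 1) = 2 * 2 ^ k := by rw [zpow_add_one₀ (by norm_num)]; ring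
  refine jd_limE (by positivity) (by linarith) ?_ ?_
  · exact ((ENNReal.le_tsum k).trans (jd_energy_sum hp hw)).trans_lt hE |>.ne
  intro E hE0 hEE
  obtain ⟨Bad, hB, hosc⟩ := hkey _ ((jdT_meas k).comp hw) E hE0 hEE (2 ^ k / 2) (by positivity)
  have h2 : volume (D ∩ {x | (2:ℝ) ^ (k + 1) < w x}) ≤ 2 * volume Bad := by
    by_cases hex : ∃ x0 ∈ D ∩ {x | w x ≤ 2 ^ k}, x0 ∉ Bad
    · obtain ⟨x0, ⟨hx0D, hx0w⟩, hx0B⟩ := hex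
      have hsub : D ∩ {x | (2:ℝ) ^ (k + 1) < w x} ⊆ Bad := by
        rintro x ⟨hxD, hxw⟩
        by_contra hxB
        have := hosc x hxD hxB x0 hx0D hx0B
        have hx0w' : w x0 ≤ 2 ^ k := hx0w
        have hxw' : (2:ℝ) ^ (k + 1) < w x := hxw
        rw [hk1] at hxw'
        have e1 : jdT k (w x) = 2 ^ k := by
          unfold jdT
          rw [max_eq_left (by linarith), min_eq_right (by linarith)]
        have e2 : jdT k (w x0) = 0 := by
          unfold jdT
          rw [max_eq_right (by linarith), min_eq_left (by linarith)]
        simp only [Function.comp_apply, e1, e2, sub_zero] at this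
        rw [abs_of_pos hk] at this
        linarith
      refine (measure_mono hsub).trans ?_
      rw [two_mul]
      exact le_self_add
    · push Not at hex
      refine (measure_mono inter_subset_left).trans ((hhalf _ hk).trans ?_)
      gcongr
      exact fun x hx => hex x hx
  refine h2.trans ?_
  have h2' : ∀ y : ℝ, (2:ℝ≥0∞) * ENNReal.ofReal y = ENNReal.ofReal (2 * y) := by
    intro y
    rw [ENNReal.ofReal_mul (by norm_num)]
    simp
  refine (mul_le_mul' le_rfl hB).trans (le_of_eq ?_)
  rw [h2']
  congr 1
  ring

lemma jd_strong {n : ℕ} {δ τ p C q r : ℝ} (hp : 1 ≤ p) (hC : 0 < C) (hq : 0 < q) (hr : 1 ≤ r)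
    {D : Set (Eucl n)} (hD : MeasurableSet D) (hkey : JdKey n δ τ p C q r D)
    {w : Eucl n → ℝ} (hw : Measurable w) (hw0 : ∀ x, 0 ≤ w x)
    (hhalf : ∀ t : ℝ, 0 < t → volume D ≤ 2 * volume (D ∩ {x | w x ≤ t}))
    (hE : fracEnergyTau n δ τ p D w < ⊤) :
    ∫⁻ x in D, ENNReal.ofReal (w x ^ q) ≤
      ENNReal.ofReal (2 * C * 8 ^ q) * fracEnergyTau n δ τ p D w ^ r := by
  have hms : ∀ k : ℤ, MeasurableSet {x | (2:ℝ) ^ (k + 1) < w x} :=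
    fun k => measurableSet_lt measurable_const hw
  calc ∫⁻ x in D, ENNReal.ofReal (w x ^ q)
      ≤ ∫⁻ x in D, ∑' k : ℤ, {x | (2:ℝ) ^ (k + 1) < w x}.indicator
          (fun _ => ENNReal.ofReal (((2:ℝ) ^ k * 4) ^ q)) x := by
        refine lintegral_mono fun x => ?_
        rcases (hw0 x).eq_or_lt with h | h
        · simp [← h, Real.zero_rpow hq.ne']
        · obtain ⟨j, hj1, hj2⟩ := exists_mem_Ioc_zpow h (one_lt_two : (1:ℝ) < 2)
          refine le_trans ?_ (ENNReal.le_tsum (j - 1))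
          have hmem : x ∈ {x | (2:ℝ) ^ (j - 1 + 1) < w x} := by
            show (2:ℝ) ^ (j - 1 + 1) < w x
            simpa using hj1
          rw [indicator_of_mem hmem]
          apply ENNReal.ofReal_le_ofReal
          apply Real.rpow_le_rpow (hw0 x) _ hq.le
          refine hj2.trans (le_of_eq ?_)
          rw [zpow_add_one₀ (by norm_num), zpow_sub_one₀ (by norm_num)]
          ring
    _ = ∑' k : ℤ, ENNReal.ofReal (((2:ℝ) ^ k * 4) ^ q) *
          volume (D ∩ {x | (2:ℝ) ^ (k + 1) < w x}) := by
        rw [lintegral_tsum fun k => (measurable_const.indicator (hms k)).aemeasurable]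
        congr 1
        funext k
        rw [lintegral_indicator (hms k), lintegral_const, Measure.restrict_apply MeasurableSet.univ,
          univ_inter, Measure.restrict_apply (hms k), inter_comm]
    _ ≤ ∑' k : ℤ, ENNReal.ofReal (2 * C * 8 ^ q) *
          fracEnergyTau n δ τ p D (fun z => jdT k (w z)) ^ r := by
        refine ENNReal.tsum_le_tsum fun k => ?_
        refine (mul_le_mul' le_rfl (jd_level hp hC hr hkey hw hhalf hE k)).trans (le_of_eq ?_)
        have hk : (0:ℝ) < 2 ^ k := by positivity
        rw [← mul_assoc, ← ENNReal.ofReal_mul (by positivity)]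
        congr 2
        rw [Real.rpow_neg (by positivity), ← Real.inv_rpow (by positivity), mul_left_comm,
          ← Real.mul_rpow (by positivity) (by positivity)]
        congr 2
        field_simp
        norm_num
    _ ≤ _ := by
        rw [ENNReal.tsum_mul_left]
        gcongr
        exact (jd_tsum_rpow _ hr).trans
          (ENNReal.rpow_le_rpow (jd_energy_sum hp hw) (by linarith))

lemma jd_const {n : ℕ} {D : Set (Eucl n)} {u : Eucl n → ℝ}
    (h : ∀ lam : ℝ, 0 < lam → ∃ Bad : Set (Eucl n), 2 * volume Bad < volume D ∧
      ∀ x ∈ D, x ∉ Bad → ∀ y ∈ D, y ∉ Bad → |u x - u y| ≤ lam) :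
    ∃ a : ℝ, ∀ lam : ℝ, 0 < lam → ∃ Bad : Set (Eucl n), 2 * volume Bad < volume D ∧
      ∀ x ∈ D, x ∉ Bad → |u x - a| ≤ lam := by
  set l : ℕ → ℝ := fun k => 1 / ((k : ℝ) + 1) with hl
  have hl0 : ∀ k, 0 < l k := fun k => by simp only [hl]; positivity
  have hlt : Filter.Tendsto l Filter.atTop (nhds 0) := tendsto_one_div_add_atTop_nhds_zero_nat
  have hanti : ∀ j k, j ≤ k → l k ≤ l j := by
    intro j k hjk
    simp only [hl]
    gcongr
  choose Bad hB hosc using fun k => h (l k) (hl0 k)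
  have hcommon : ∀ j k, ∃ z ∈ D, z ∉ Bad j ∧ z ∉ Bad k := by
    intro j k
    by_contra hne
    push Not at hne
    have hsub : D ⊆ Bad j ∪ Bad k := by
      intro z hz
      by_cases hzj : z ∈ Bad j
      · exact Or.inl hzj
      · exact Or.inr (hne z hz hzj)
    have h1 : volume D ≤ volume (Bad j) + volume (Bad k) :=
      (measure_mono hsub).trans (measure_union_le _ _)
    have h2 : 2 * volume D ≤ 2 * volume (Bad j) + 2 * volume (Bad k) := by
      rw [← mul_add]; gcongr
    have h3 := ENNReal.add_lt_add (hB j) (hB k)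
    rw [← two_mul] at h3
    exact absurd h2 (not_le.2 h3)
  have hx : ∀ k, ∃ z ∈ D, z ∉ Bad k := fun k => by
    obtain ⟨z, h1, h2, -⟩ := hcommon k k
    exact ⟨z, h1, h2⟩
  choose x hxD hxB using hx
  have hdist : ∀ j k, |u (x j) - u (x k)| ≤ l j + l k := by
    intro j k
    obtain ⟨z, hz, hzj, hzk⟩ := hcommon j k
    have h1 := hosc j _ (hxD j) (hxB j) z hz hzj
    have h2 := hosc k z hz hzk _ (hxD k) (hxB k)
    have := abs_sub_le (u (x j)) (u z) (u (x k))
    linarith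
  have hcau : CauchySeq (fun k => u (x k)) := by
    refine cauchySeq_of_le_tendsto_0 (fun k => 2 * l k) ?_ (by simpa using hlt.const_mul 2)
    intro j k N hj hk
    rw [Real.dist_eq]
    have := hdist j k
    have h1 := hanti N j hj
    have h2 := hanti N k hk
    linarith
  obtain ⟨a, ha⟩ := cauchySeq_tendsto_of_complete hcau
  refine ⟨a, fun lam hlam => ?_⟩
  have hev : ∀ᶠ k in Filter.atTop, l k < lam / 3 := hlt.eventually_lt_const (by positivity)
  obtain ⟨k, hk⟩ := hev.exists
  refine ⟨Bad k, hB k, fun y hy hyB => ?_⟩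
  have h1 := hosc k y hy hyB _ (hxD k) (hxB k)
  have h2 : |u (x k) - a| ≤ 2 * l k := by
    have ht : Filter.Tendsto (fun j => |u (x k) - u (x j)|) Filter.atTop (nhds |u (x k) - a|) :=
      (ha.const_sub _).abs
    refine le_of_tendsto ht ?_
    filter_upwards [Filter.eventually_ge_atTop k] with j hj
    have := hdist k j
    have := hanti k j hj
    linarith
  have := abs_sub_le (u y) (u (x k)) a
  linarith

open MeasureTheory Metric Set
open scoped ENNReal NNReal BigOperators

/-- half-measure condition from a small bad set -/
lemma jd_half {n : ℕ} {D Bad S : Set (Eucl n)} (hB : 2 * volume Bad < volume D)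
    (hS : ∀ x ∈ D, x ∉ Bad → x ∈ S) : volume D ≤ 2 * volume (D ∩ S) := by
  have hsub : D ⊆ (D ∩ S) ∪ Bad := by
    intro x hx
    by_cases hxB : x ∈ Bad
    · exact Or.inr hxB
    · exact Or.inl ⟨hx, hS x hx hxB⟩
  have h1 : volume D ≤ volume (D ∩ S) + volume Bad :=
    (measure_mono hsub).trans (measure_union_le _ _)
  have hBt : 2 * volume Bad ≠ ⊤ := hB.ne_top
  have h2 : volume D + 2 * volume Bad ≤ 2 * volume (D ∩ S) + 2 * volume Bad := by
    calc volume D + 2 * volume Bad ≤ volume D + volume D := by gcongr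
      _ ≤ (volume (D ∩ S) + volume Bad) + (volume (D ∩ S) + volume Bad) := by gcongr
      _ = _ := by ring
  exact (ENNReal.add_le_add_iff_right hBt).1 h2

lemma jd_case1 {n : ℕ} {δ τ p C q r : ℝ} (hp : 1 ≤ p) (hC : 0 < C) (hq : 0 < q) (hr : 1 ≤ r)
    {D : Set (Eucl n)} (hD : MeasurableSet D) (hkey : JdKey n δ τ p C q r D)
    {u : Eucl n → ℝ} (hu : Measurable u) (hE : fracEnergyTau n δ τ p D u < ⊤)
    (h : ∀ lam : ℝ, 0 < lam → ∃ Bad : Set (Eucl n), 2 * volume Bad < volume D ∧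
      ∀ x ∈ D, x ∉ Bad → ∀ y ∈ D, y ∉ Bad → |u x - u y| ≤ lam) :
    ∃ a : ℝ, ∫⁻ x in D, ENNReal.ofReal (|u x - a| ^ q) ≤
      ENNReal.ofReal (2 * C * 8 ^ q) * fracEnergyTau n δ τ p D u ^ r := by
  obtain ⟨a, ha⟩ := jd_const h
  have hle : fracEnergyTau n δ τ p D (fun x => |u x - a|) ≤ fracEnergyTau n δ τ p D u := by
    refine jd_contr (by linarith) fun x y => ?_
    have := abs_abs_sub_abs_le_abs_sub (u x - a) (u y - a)
    simpa using this
  refine ⟨a, (jd_strong hp hC hq hr hD hkey (w := fun x => |u x - a|) (by fun_prop)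
    (fun x => abs_nonneg _) ?_ (hle.trans_lt hE)).trans ?_⟩
  · intro t ht
    obtain ⟨Bad, hB, hB2⟩ := ha t ht
    exact jd_half hB hB2
  · gcongr

lemma jd_main {n : ℕ} {δ τ p C q r : ℝ} (hp : 1 ≤ p) (hC : 0 < C) (hq : 0 < q) (hr : 1 ≤ r)
    {D : Set (Eucl n)} (hD : MeasurableSet D) (hpos : 0 < volume D)
    (hkey : JdKey n δ τ p C q r D)
    {u : Eucl n → ℝ} (hu : Measurable u) (hE : fracEnergyTau n δ τ p D u < ⊤) :
    ∃ a : ℝ, ∫⁻ x in D, ENNReal.ofReal (|u x - a| ^ q) ≤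
      ENNReal.ofReal (2 ^ q * (2 * C * 8 ^ q + 4 * C)) * fracEnergyTau n δ τ p D u ^ r := by
  have hr0 : 0 < r := by linarith
  have h2q : (1:ℝ) ≤ 2 ^ q := Real.one_le_rpow (by norm_num) hq.le
  have h8q : (0:ℝ) < 8 ^ q := by positivity
  have hcst : 2 * C * 8 ^ q ≤ 2 ^ q * (2 * C * 8 ^ q + 4 * C) := by
    have h0 : 0 ≤ 2 * C * 8 ^ q + 4 * C := by positivity
    nlinarith
  have h2m : ∀ y : ℝ, (2:ℝ≥0∞) * ENNReal.ofReal y = ENNReal.ofReal (2 * y) := by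
    intro y
    rw [ENNReal.ofReal_mul (by norm_num)]
    simp
  by_cases hcase : volume D = ⊤ ∨ fracEnergyTau n δ τ p D u = 0
  · have h1 : ∃ a : ℝ, ∫⁻ x in D, ENNReal.ofReal (|u x - a| ^ q) ≤
        ENNReal.ofReal (2 * C * 8 ^ q) * fracEnergyTau n δ τ p D u ^ r := by
      refine jd_case1 hp hC hq hr hD hkey hu hE ?_
      intro lam hlam
      rcases hcase with hV | he
      · obtain ⟨Bad, hB, hosc⟩ := hkey u hu ((fracEnergyTau n δ τ p D u).toReal + 1)
          (by positivity) (by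
            rw [ENNReal.le_ofReal_iff_toReal_le hE.ne (by positivity)]
            linarith) lam hlam
        refine ⟨Bad, ?_, hosc⟩
        rw [hV]
        exact ENNReal.mul_lt_top (by simp) (hB.trans_lt ENNReal.ofReal_lt_top)
      · obtain ⟨v, hv0, hv⟩ : ∃ v : ℝ, 0 < v ∧ ENNReal.ofReal v < volume D := by
          obtain ⟨v, hv0, hv⟩ := ENNReal.lt_iff_exists_nnreal_btwn.1 hpos
          refine ⟨v, by exact_mod_cast hv0, by simpa using hv⟩
        have hlq : 0 < lam ^ (-q) := by positivity
        set E : ℝ := (v / (2 * (C * lam ^ (-q)))) ^ (1 / r) with hEdef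
        have hE0 : 0 < E := by positivity
        obtain ⟨Bad, hB, hosc⟩ := hkey u hu E hE0 (by rw [he]; exact zero_le) lam hlam
        refine ⟨Bad, ?_, hosc⟩
        refine lt_of_le_of_lt (mul_le_mul' le_rfl hB) ?_
        rw [h2m]
        refine lt_of_le_of_lt (le_of_eq ?_) hv
        congr 1
        rw [hEdef, ← Real.rpow_mul (by positivity), one_div_mul_cancel hr0.ne', Real.rpow_one]
        field_simp
    obtain ⟨a, ha⟩ := h1
    refine ⟨a, ha.trans ?_⟩
    gcongr
  · push Not at hcase
    obtain ⟨hV, he⟩ := hcase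
    set E : ℝ := (fracEnergyTau n δ τ p D u).toReal with hEd
    have hE0 : 0 < E := ENNReal.toReal_pos he hE.ne
    have hEe : fracEnergyTau n δ τ p D u = ENNReal.ofReal E := (ENNReal.ofReal_toReal hE.ne).symm
    set V : ℝ := (volume D).toReal with hVd
    have hV0 : 0 < V := ENNReal.toReal_pos hpos.ne' hV
    have hVe : volume D = ENNReal.ofReal V := (ENNReal.ofReal_toReal hV).symm
    have hEr : 0 < E ^ r := by positivity
    set X : ℝ := 4 * C * E ^ r / V with hX
    have hX0 : 0 < X := by positivity
    set l0 : ℝ := X ^ (1 / q) with hl0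
    have hl00 : 0 < l0 := by positivity
    have hlq : l0 ^ q = X := by
      rw [hl0, ← Real.rpow_mul hX0.le, one_div_mul_cancel hq.ne', Real.rpow_one]
    obtain ⟨Bad, hB, hosc⟩ := hkey u hu E hE0 hEe.le l0 hl00
    have hB2 : 2 * volume Bad < volume D := by
      refine lt_of_le_of_lt (mul_le_mul' le_rfl hB) ?_
      rw [h2m, hVe, Real.rpow_neg hl00.le, hlq, ENNReal.ofReal_lt_ofReal_iff hV0, hX]
      have : 2 * (C * ((4 * C * E ^ r / V)⁻¹ * E ^ r)) = V / 2 := by field_simp; norm_num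
      rw [this]
      linarith
    obtain ⟨x0, hx0, hx0B⟩ : ∃ x0 ∈ D, x0 ∉ Bad := by
      by_contra hne
      push Not at hne
      have h1 : volume D ≤ volume Bad := measure_mono hne
      have h2 : volume Bad ≤ 2 * volume Bad := by rw [two_mul]; exact le_self_add
      exact absurd (h1.trans h2) (not_le.2 hB2)
    refine ⟨u x0, ?_⟩
    set w : Eucl n → ℝ := fun x => max (|u x - u x0| - l0) 0 with hw
    have hwm : Measurable w := by rw [hw]; fun_prop
    have hle : fracEnergyTau n δ τ p D w ≤ fracEnergyTau n δ τ p D u := by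
      refine jd_contr (by linarith) fun x y => ?_
      have h1 := abs_abs_sub_abs_le_abs_sub (u x - u x0) (u y - u x0)
      have h2 := abs_max_sub_max_le_abs (|u x - u x0| - l0) (|u y - u x0| - l0) 0
      simp only [sub_sub_sub_cancel_right] at h1 h2
      exact h2.trans h1
    have hst := jd_strong hp hC hq hr hD hkey hwm (fun x => le_max_right _ _) (by
      intro t ht
      refine jd_half hB2 fun x hx hxB => ?_
      have := hosc x hx hxB x0 hx0 hx0B
      show max (|u x - u x0| - l0) 0 ≤ t
      exact max_le (by linarith) ht.le) (hle.trans_lt hE)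
    have hpt : ∀ x, ENNReal.ofReal (|u x - u x0| ^ q) ≤
        ENNReal.ofReal (2 ^ q) * (ENNReal.ofReal (w x ^ q) + ENNReal.ofReal X) := by
      intro x
      have hw0 : 0 ≤ w x := le_max_right _ _
      rw [← ENNReal.ofReal_add (by positivity) hX0.le, ← ENNReal.ofReal_mul (by positivity)]
      apply ENNReal.ofReal_le_ofReal
      have h1 : |u x - u x0| ≤ 2 * max (w x) l0 := by
        have h2 : |u x - u x0| - l0 ≤ w x := le_max_left _ _
        have h3 := le_max_left (w x) l0
        have h4 := le_max_right (w x) l0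
        linarith
      have hm0 : 0 ≤ max (w x) l0 := hw0.trans (le_max_left _ _)
      calc |u x - u x0| ^ q ≤ (2 * max (w x) l0) ^ q :=
            Real.rpow_le_rpow (abs_nonneg _) h1 hq.le
        _ = 2 ^ q * (max (w x) l0) ^ q := Real.mul_rpow (by norm_num) hm0
        _ ≤ 2 ^ q * (w x ^ q + X) := by
          gcongr
          have hwq : 0 ≤ w x ^ q := by positivity
          rcases max_choice (w x) l0 with h | h
          · rw [h]; linarith
          · rw [h, hlq]; linarith
    calc ∫⁻ x in D, ENNReal.ofReal (|u x - u x0| ^ q)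
        ≤ ∫⁻ x in D, ENNReal.ofReal (2 ^ q) * (ENNReal.ofReal (w x ^ q) + ENNReal.ofReal X) :=
          lintegral_mono hpt
      _ = ENNReal.ofReal (2 ^ q) * ((∫⁻ x in D, ENNReal.ofReal (w x ^ q)) +
            ENNReal.ofReal X * volume D) := by
          rw [lintegral_const_mul' _ _ ENNReal.ofReal_ne_top, lintegral_add_right _ measurable_const,
            lintegral_const, Measure.restrict_apply MeasurableSet.univ, univ_inter]
      _ ≤ ENNReal.ofReal (2 ^ q) * (ENNReal.ofReal (2 * C * 8 ^ q) *
            fracEnergyTau n δ τ p D u ^ r + ENNReal.ofReal (4 * C) *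
            fracEnergyTau n δ τ p D u ^ r) := by
          refine mul_le_mul' le_rfl (add_le_add ?_ ?_)
          · exact hst.trans (by gcongr)
          · rw [hVe, hEe, ENNReal.ofReal_rpow_of_pos hE0, ← ENNReal.ofReal_mul hX0.le,
              ← ENNReal.ofReal_mul (by positivity), hX]
            apply ENNReal.ofReal_le_ofReal
            apply le_of_eq
            field_simp
      _ = _ := by
          rw [← add_mul, ← ENNReal.ofReal_add (by positivity) (by positivity), ← mul_assoc,
            ← ENNReal.ofReal_mul (by positivity)]

lemma jd_unbdd {n : ℕ} (hn : 2 ≤ n) {c : ℝ} (hc : 1 ≤ c) {D : Set (Eucl n)}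
    (hD : IsJohnDomain n c D) (hub : ¬ Bornology.IsBounded D) : volume D = ⊤ := by
  obtain ⟨hO, hCn, hJ⟩ := hD
  obtain ⟨x1, hx1⟩ := hCn.nonempty
  have hfar : ∀ R : ℝ, ∃ y ∈ D, R < dist x1 y := by
    intro R
    by_contra hne
    push Not at hne
    apply hub
    refine isBounded_closedBall.subset (s := D) (t := closedBall x1 R) fun y hy => ?_
    rw [mem_closedBall, dist_comm]
    exact hne y hy
  refine ENNReal.eq_top_of_forall_nnreal_le fun N => ?_
  have hw := jdw_pos n
  set R : ℝ := max 1 (N / jdw n) with hR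
  have hR1 : 1 ≤ R := le_max_left _ _
  obtain ⟨y, hy, hyR⟩ := hfar (2 * c * R)
  obtain ⟨l, hl0, γ, hγ0, hγl, hγD, hLip, hJd⟩ := hJ x1 hx1 y hy
  have hl : 2 * c * R < l := by
    have := hLip.dist_le_mul 0 ⟨le_rfl, hl0⟩ l ⟨hl0, le_rfl⟩
    rw [hγ0, hγl, Real.dist_eq, zero_sub, abs_neg, abs_of_nonneg hl0] at this
    simp only [NNReal.coe_one, one_mul] at this
    linarith
  have hmid : l / 2 ∈ Icc (0:ℝ) l := ⟨by linarith, by linarith⟩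
  have h1 := hJd _ hmid
  have h2 : min (l / 2) (l - l / 2) = l / 2 := by
    rw [min_eq_left]; linarith
  rw [h2] at h1
  have h3 : R ≤ l / 2 / c := by
    rw [le_div_iff₀ (by linarith)]
    nlinarith
  have hsub := jd_ball_sub hO (hγD _ hmid) (h3.trans h1)
  refine le_trans ?_ (measure_mono hsub)
  rw [jd_vol_ball _ (by linarith : 0 < R), ENNReal.le_ofReal_iff_toReal_le (by simp) (by positivity)]
  have h4 : N / jdw n ≤ R := le_max_right _ _
  have h5 : R ≤ R ^ n := le_self_pow₀ hR1 (by omega)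
  rw [div_le_iff₀ hw] at h4
  simp only [ENNReal.coe_toReal]
  nlinarith

/-- Embedding of the homogeneous space: for a (bounded or unbounded)
`c`-John domain `D ⊆ ℝⁿ`, `n ≥ 2`, `τ, δ ∈ (0,1)`, `1 ≤ p < n/δ` and
`q = np/(n-δp)`, there is `C = C(δ,τ,p,n,c)` such that every measurable `u : D → ℝ` with
`|u|_{W^{δ,p}_τ(D)} < ∞` admits `a_u ∈ ℝ` with
`‖u - a_u‖_{L^q(D)} ≤ C |u|_{W^{δ,p}_τ(D)}`; if moreover `D` is unbounded and `u` has
compact support in `D`, then one can take `a_u = 0`. -/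
theorem statement17 (n : ℕ) (hn : 2 ≤ n) (c : ℝ) (hc : 1 ≤ c)
    (τ δ p : ℝ) (hτ : τ ∈ Ioo (0:ℝ) 1) (hδ : δ ∈ Ioo (0:ℝ) 1)
    (hp : 1 ≤ p) (hpn : p < n / δ) :
    ∃ C : ℝ, 0 < C ∧
      ∀ D : Set (Eucl n), IsJohnDomain n c D →
        (∀ u : Eucl n → ℝ, Measurable u → fracEnergyTau n δ τ p D u < ⊤ →
          ∃ a : ℝ,
            (∫⁻ x in D, ENNReal.ofReal
                (|u x - a| ^ ((n:ℝ) * p / ((n:ℝ) - δ * p))) ∂volume) ^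
                (((n:ℝ) - δ * p) / ((n:ℝ) * p))
              ≤ ENNReal.ofReal C * fracEnergyTau n δ τ p D u ^ (1 / p)) ∧
        (¬ Bornology.IsBounded D →
          ∀ u : Eucl n → ℝ, Measurable u → fracEnergyTau n δ τ p D u < ⊤ →
            HasCompactSupport u → tsupport u ⊆ D →
            (∫⁻ x in D, ENNReal.ofReal
                (|u x| ^ ((n:ℝ) * p / ((n:ℝ) - δ * p))) ∂volume) ^
                (((n:ℝ) - δ * p) / ((n:ℝ) * p))
              ≤ ENNReal.ofReal C * fracEnergyTau n δ τ p D u ^ (1 / p)) := by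
  obtain ⟨C, hC, hk⟩ := jd_key n hn c hc τ δ p hτ hδ hp hpn
  have hδ0 : 0 < δ := hδ.1
  have hn0 : (0:ℝ) < n := by exact_mod_cast (by omega : 0 < n)
  have hpos : 0 < (n:ℝ) - δ * p := by
    rw [lt_div_iff₀ hδ0] at hpn
    linarith
  have hp0 : 0 < p := by linarith
  set q : ℝ := (n:ℝ) * p / ((n:ℝ) - δ * p) with hqd
  have hq : 0 < q := by positivity
  set r : ℝ := (n:ℝ) / ((n:ℝ) - δ * p) with hrd
  have hr : 1 ≤ r := by
    rw [hrd, le_div_iff₀ hpos]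
    nlinarith
  have hs : ((n:ℝ) - δ * p) / ((n:ℝ) * p) = 1 / q := by rw [hqd, one_div_div]
  have hrs : r * (1 / q) = 1 / p := by
    rw [hrd, hqd]
    field_simp
  rw [hs]
  set K : ℝ := 2 ^ q * (2 * C * 8 ^ q + 4 * C) with hK
  have hK0 : 0 < K := by positivity
  have main : ∀ D : Set (Eucl n), IsJohnDomain n c D →
      ∀ u : Eucl n → ℝ, Measurable u → fracEnergyTau n δ τ p D u < ⊤ →
      ∃ a : ℝ, (∫⁻ x in D, ENNReal.ofReal (|u x - a| ^ q) ∂volume) ^ (1 / q)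
              ≤ ENNReal.ofReal (K ^ (1 / q)) * fracEnergyTau n δ τ p D u ^ (1 / p) := by
    intro D hD u hu hE
    obtain ⟨a, ha⟩ := jd_main (r := r) hp hC hq hr hD.1.measurableSet
      (hD.1.measure_pos _ hD.2.1.nonempty) (hk D hD) hu hE
    refine ⟨a, (ENNReal.rpow_le_rpow ha (by positivity)).trans (le_of_eq ?_)⟩
    rw [ENNReal.mul_rpow_of_nonneg _ _ (by positivity), ← ENNReal.rpow_mul, hrs,
      ENNReal.ofReal_rpow_of_pos hK0]
  refine ⟨K ^ (1 / q), by positivity, fun D hD => ⟨main D hD, ?_⟩⟩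
  intro hub u hu hE hcs _
  obtain ⟨a, ha⟩ := main D hD u hu hE
  have ha0 : a = 0 := by
    by_contra hne
    have hV := jd_unbdd hn hc hD hub
    have hfin : (∫⁻ x in D, ENNReal.ofReal (|u x - a| ^ q) ∂volume) ^ (1 / q) < ⊤ :=
      ha.trans_lt (ENNReal.mul_lt_top ENNReal.ofReal_lt_top
        (ENNReal.rpow_lt_top_of_nonneg (by positivity) hE.ne))
    have hKf : volume (tsupport u) < ⊤ := hcs.isCompact.measure_lt_top
    have htop : volume (D \ tsupport u) = ⊤ := by
      by_contra hlt
      have h1 : volume D ≤ volume (D \ tsupport u) + volume (tsupport u) := by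
        refine (measure_mono ?_).trans (measure_union_le _ _)
        intro x hx
        by_cases h : x ∈ tsupport u
        · exact Or.inr h
        · exact Or.inl ⟨hx, h⟩
      rw [hV, top_le_iff] at h1
      exact (ENNReal.add_lt_top.2 ⟨lt_top_iff_ne_top.2 hlt, hKf⟩).ne h1
    have hItop : (∫⁻ x in D, ENNReal.ofReal (|u x - a| ^ q) ∂volume) = ⊤ := by
      rw [← top_le_iff]
      have hap : 0 < |a| := abs_pos.2 hne
      calc (⊤:ℝ≥0∞) = ENNReal.ofReal (|a| ^ q) * volume (D \ tsupport u) := by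
            rw [htop, ENNReal.mul_top]
            exact (ENNReal.ofReal_pos.2 (by positivity)).ne'
        _ = ∫⁻ x in D \ tsupport u, ENNReal.ofReal (|a| ^ q) := by
            rw [lintegral_const, Measure.restrict_apply MeasurableSet.univ, univ_inter]
        _ = ∫⁻ x in D \ tsupport u, ENNReal.ofReal (|u x - a| ^ q) := by
            refine setLIntegral_congr_fun
              (hD.1.measurableSet.diff (isClosed_tsupport u).measurableSet) fun x hx => ?_
            have : u x = 0 := image_eq_zero_of_notMem_tsupport hx.2
            simp [this]
        _ ≤ _ := lintegral_mono_set sdiff_subset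
    rw [hItop, ENNReal.top_rpow_of_pos (by positivity)] at hfin
    exact lt_irrefl _ hfin
  rw [ha0] at ha
  simpa using ha
end

section
/- Let L be a closed line segment in ℝ² and let D = ℝ² ∖ L. Then for every 1 < p < ∞ and δ = 1/p, the fractional (δ,p,p)-Hardy inequality fails in D: for every constant C > 0 there exists u ∈ C₀(D) such that ∫_D |u(x)|^p / dist(x, ∂D) dx > C ∫_D ∫_D |u(x) − u(y)|^p / |x−y|^{2+1} dy dx. -/
open MeasureTheory Metric Set
open scoped ENNReal NNReal BigOperators

namespace HardyFail

/-- Volume of a ball in the plane. -/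
lemma vol_ball (x : Eucl 2) {r : ℝ} (hr : 0 < r) :
    volume (ball x r) = ENNReal.ofReal (r ^ 2) * volume (ball (0 : Eucl 2) 1) := by
  have := Measure.addHaar_ball_of_pos (volume : Measure (Eucl 2)) x hr
  simpa using this

lemma vol_upper (a b : Eucl 2) (hab : a ≠ b) :
    ∃ K : ℝ≥0∞, K ≠ ⊤ ∧ ∀ ε : ℝ, 0 < ε → ε ≤ 1 →
      volume {x : Eucl 2 | infDist x (segment ℝ a b) < 2 * ε} ≤ K * ENNReal.ofReal ε := by
  set l := dist b a with hl
  have hlpos : 0 < l := dist_pos.2 hab.symm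
  refine ⟨ENNReal.ofReal (9 * (l + 2)) * volume (ball (0 : Eucl 2) 1),
    ENNReal.mul_ne_top ENNReal.ofReal_ne_top measure_ball_lt_top.ne, fun ε hε hε1 => ?_⟩
  set N := ⌈l / ε⌉₊ with hN
  have hNpos : 0 < N := Nat.ceil_pos.2 (div_pos hlpos hε)
  have hNr : (0:ℝ) < N := by exact_mod_cast hNpos
  have hN1 : l / ε ≤ N := Nat.le_ceil _
  have hN2 : (N:ℝ) < l / ε + 1 := Nat.ceil_lt_add_one (div_pos hlpos hε).le
  let c : ℕ → Eucl 2 := fun k => a + ((k:ℝ) / N) • (b - a)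
  have hsub : {x : Eucl 2 | infDist x (segment ℝ a b) < 2 * ε} ⊆
      ⋃ k ∈ Finset.range (N + 1), ball (c k) (3 * ε) := by
    intro x hx
    obtain ⟨y, hy, hxy⟩ := (infDist_lt_iff ⟨a, left_mem_segment ℝ a b⟩).1 hx
    rw [segment_eq_image'] at hy
    obtain ⟨t, ⟨ht0, ht1⟩, rfl⟩ := hy
    simp only [mem_iUnion]
    refine ⟨⌊t * N⌋₊, ?_, ?_⟩
    · rw [Finset.mem_range, Nat.lt_succ_iff]
      apply Nat.floor_le_of_le
      nlinarith
    · have h1 : (⌊t * N⌋₊ : ℝ) ≤ t * N := Nat.floor_le (by positivity)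
      have h2 : t * N < ⌊t * N⌋₊ + 1 := Nat.lt_floor_add_one _
      have h3 : dist (a + t • (b - a)) (c ⌊t * N⌋₊) ≤ ε := by
        simp only [c, dist_add_left]
        rw [dist_eq_norm, ← sub_smul, norm_smul, ← dist_eq_norm b a, ← hl, Real.norm_eq_abs]
        have h4 : |t - ⌊t * N⌋₊ / N| ≤ 1 / N := by
          have : t - ⌊t * N⌋₊ / N = (t * N - ⌊t * N⌋₊) / N := by field_simp
          rw [this, abs_of_nonneg (div_nonneg (by linarith) hNr.le)]
          gcongr
          linarith
        calc _ ≤ 1 / (N:ℝ) * l := by gcongr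
          _ ≤ ε := by
            rw [div_mul_eq_mul_div, one_mul, div_le_iff₀ hNr]
            rw [div_le_iff₀ hε] at hN1; linarith
      rw [mem_ball]
      linarith [dist_triangle x (a + t • (b - a)) (c ⌊t * N⌋₊)]
  calc _ ≤ volume (⋃ k ∈ Finset.range (N + 1), ball (c k) (3 * ε)) := measure_mono hsub
    _ ≤ ∑ k ∈ Finset.range (N + 1), volume (ball (c k) (3 * ε)) := measure_biUnion_finset_le _ _
    _ = ((N + 1 : ℕ) : ℝ≥0∞) * (ENNReal.ofReal ((3 * ε) ^ 2) * volume (ball (0 : Eucl 2) 1)) := by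
        rw [Finset.sum_congr rfl (fun k _ => vol_ball (c k) (by positivity : 0 < 3 * ε))]
        simp
    _ = ENNReal.ofReal (((N + 1 : ℕ) : ℝ) * (3 * ε) ^ 2) * volume (ball (0 : Eucl 2) 1) := by
        rw [ENNReal.ofReal_mul (by positivity), ENNReal.ofReal_natCast, mul_assoc]
    _ ≤ ENNReal.ofReal (9 * (l + 2) * ε) * volume (ball (0 : Eucl 2) 1) := by
        refine mul_le_mul_left (ENNReal.ofReal_le_ofReal ?_) _
        push_cast
        have : (N:ℝ) * ε ≤ l + ε := by
          have := mul_le_mul_of_nonneg_right hN2.le hε.le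
          rwa [add_mul, div_mul_cancel₀ _ hε.ne', one_mul] at this
        nlinarith
    _ = _ := by
        rw [ENNReal.ofReal_mul (by positivity)]; ring

lemma vol_lower (a b : Eucl 2) (hab : a ≠ b) :
    ∃ K : ℝ≥0∞, K ≠ 0 ∧ ∀ t : ℝ, 0 < t →
      K * ENNReal.ofReal t ≤ volume {x : Eucl 2 | infDist x (segment ℝ a b) < t} := by
  set l := dist b a with hl
  have hlpos : 0 < l := dist_pos.2 hab.symm
  refine ⟨ENNReal.ofReal (l / 2) * volume (ball (0 : Eucl 2) 1),
    mul_ne_zero (by simpa using hlpos) (measure_ball_pos _ _ one_pos).ne', fun t ht => ?_⟩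
  set N := ⌊l / (2 * t)⌋₊ with hN
  have hN1 : (N:ℝ) ≤ l / (2 * t) := Nat.floor_le (by positivity)
  have hN2 : l / (2 * t) < N + 1 := Nat.lt_floor_add_one _
  let c : ℕ → Eucl 2 := fun k => a + ((k:ℝ) * (2 * t) / l) • (b - a)
  have hsub : (⋃ k ∈ Finset.range (N + 1), ball (c k) t) ⊆
      {x : Eucl 2 | infDist x (segment ℝ a b) < t} := by
    intro x hx
    simp only [mem_iUnion] at hx
    obtain ⟨k, hk, hx⟩ := hx
    have hkN : (k:ℝ) ≤ N := by exact_mod_cast Nat.lt_succ_iff.1 (Finset.mem_range.1 hk)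
    refine lt_of_le_of_lt (infDist_le_dist_of_mem (y := c k) ?_) hx
    rw [segment_eq_image']
    refine ⟨(k:ℝ) * (2 * t) / l, ⟨by positivity, ?_⟩, rfl⟩
    rw [div_le_one hlpos]
    rw [← le_div_iff₀ (by positivity)]
    exact hkN.trans hN1
  have hdisj : Set.PairwiseDisjoint (↑(Finset.range (N + 1))) (fun k => ball (c k) t) := by
    intro i _ j _ hij
    apply ball_disjoint_ball
    simp only [c, dist_add_left]
    rw [dist_eq_norm, ← sub_smul, norm_smul, ← dist_eq_norm b a, ← hl, Real.norm_eq_abs]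
    have : (i:ℝ) * (2 * t) / l - j * (2 * t) / l = ((i:ℝ) - j) * (2 * t) / l := by ring
    rw [this, abs_div, abs_mul, abs_of_pos hlpos, div_mul_cancel₀ _ hlpos.ne',
      abs_of_pos (by positivity : 0 < 2 * t)]
    have h1 : (1:ℝ) ≤ |(i:ℝ) - j| := by
      have : (1:ℤ) ≤ |(i:ℤ) - j| := Int.one_le_abs (sub_ne_zero.2 (by exact_mod_cast hij))
      exact_mod_cast this
    nlinarith
  calc _ = ENNReal.ofReal (l / 2 * t) * volume (ball (0 : Eucl 2) 1) := by
        rw [ENNReal.ofReal_mul (by positivity)]; ring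
    _ ≤ ENNReal.ofReal (((N + 1 : ℕ) : ℝ) * t ^ 2) * volume (ball (0 : Eucl 2) 1) := by
        refine mul_le_mul_left (ENNReal.ofReal_le_ofReal ?_) _
        push_cast
        rw [div_lt_iff₀ (by positivity)] at hN2
        nlinarith
    _ = ((N + 1 : ℕ) : ℝ≥0∞) * (ENNReal.ofReal (t ^ 2) * volume (ball (0 : Eucl 2) 1)) := by
        rw [ENNReal.ofReal_mul (by positivity), ENNReal.ofReal_natCast, mul_assoc]
    _ = ∑ k ∈ Finset.range (N + 1), volume (ball (c k) t) := by
        rw [Finset.sum_congr rfl (fun k _ => vol_ball (c k) ht)]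
        simp
    _ = volume (⋃ k ∈ Finset.range (N + 1), ball (c k) t) :=
        (measure_biUnion_finset hdisj (fun k _ => measurableSet_ball)).symm
    _ ≤ _ := measure_mono hsub

lemma seg_null (a b : Eucl 2) (hab : a ≠ b) : volume (segment ℝ a b) = 0 := by
  obtain ⟨K, hK, h⟩ := vol_upper a b hab
  have hlim : Filter.Tendsto (fun n : ℕ => K * ENNReal.ofReal (1 / ((n:ℝ) + 1))) Filter.atTop
      (nhds (K * ENNReal.ofReal 0)) :=
    ENNReal.Tendsto.const_mul
      (ENNReal.tendsto_ofReal tendsto_one_div_add_atTop_nhds_zero_nat) (Or.inr hK)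
  rw [ENNReal.ofReal_zero, mul_zero] at hlim
  refine le_antisymm (ge_of_tendsto' hlim fun n => ?_) bot_le
  refine le_trans (measure_mono fun x hx => ?_) (h (1 / ((n:ℝ) + 1)) (by positivity) ?_)
  · simp only [mem_ofPred_eq, infDist_zero_of_mem hx]; positivity
  · rw [div_le_one (by positivity)]; linarith [(Nat.cast_nonneg n : (0:ℝ) ≤ n)]

lemma seg_compact (a b : Eucl 2) : IsCompact (segment ℝ a b) := by
  rw [segment_eq_image']
  exact isCompact_Icc.image (by fun_prop)

lemma seg_frontier (a b : Eucl 2) (hab : a ≠ b) :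
    frontier (segment ℝ a b)ᶜ = segment ℝ a b := by
  rw [frontier_compl, (seg_compact a b).isClosed.frontier_eq,
    Measure.interior_eq_empty_of_null (seg_null a b hab), sdiff_empty]

/-- The Hardy weight is not integrable near the segment. -/
lemma hardy_large (a b : Eucl 2) (hab : a ≠ b) (M : ℝ≥0∞) (hM : M ≠ ⊤) :
    ∃ ε : ℝ, 0 < ε ∧ ε ≤ 1 / 2 ∧
      M < ∫⁻ x in {x : Eucl 2 | 2 * ε ≤ infDist x (segment ℝ a b) ∧
          infDist x (segment ℝ a b) ≤ 1},
        ENNReal.ofReal (1 / infDist x (segment ℝ a b)) := by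
  set L := segment ℝ a b with hL
  set d : Eucl 2 → ℝ := fun x => infDist x L with hd
  have hdc : Continuous d := continuous_infDist_pt L
  have hdm : Measurable d := hdc.measurable
  set μ : Measure (Eucl 2) := (volume.restrict {x | d x ≤ 1}).withDensity
    (fun x => ENNReal.ofReal (1 / d x)) with hμ
  have hm1 : MeasurableSet {x | d x ≤ 1} := measurableSet_le hdm measurable_const
  have hμs : ∀ s : Set (Eucl 2), MeasurableSet s →
      μ s = ∫⁻ x in s ∩ {x | d x ≤ 1}, ENNReal.ofReal (1 / d x) := by
    intro s hs
    rw [hμ, withDensity_apply _ hs, Measure.restrict_restrict hs]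
  obtain ⟨K, hK0, hK⟩ := vol_lower a b hab
  -- small sets
  have hlow : ∀ t : ℝ, 0 < t → t ≤ 1 → K ≤ μ {x | 0 < d x ∧ d x < t} := by
    intro t ht ht1
    have hms : MeasurableSet {x | 0 < d x ∧ d x < t} :=
      (measurableSet_lt measurable_const hdm).inter (measurableSet_lt hdm measurable_const)
    rw [hμs _ hms, inter_eq_left.2 (show {x | 0 < d x ∧ d x < t} ⊆ {x | d x ≤ 1} from
      fun x hx => hx.2.le.trans ht1)]
    have hvol : volume {x | d x < t} ≤ volume {x | 0 < d x ∧ d x < t} := by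
      have : {x | d x < t} ⊆ {x | 0 < d x ∧ d x < t} ∪ L := by
        intro x hx
        by_cases h0 : 0 < d x
        · exact Or.inl ⟨h0, hx⟩
        · right
          have h0' : d x = 0 := le_antisymm (not_lt.1 h0) infDist_nonneg
          exact ((seg_compact a b).isClosed.mem_iff_infDist_zero ⟨a, left_mem_segment ℝ a b⟩).2 h0'
      refine (measure_mono this).trans ((measure_union_le _ _).trans ?_)
      rw [seg_null a b hab, add_zero]
    calc K = K * ENNReal.ofReal t * ENNReal.ofReal (1 / t) := by
          rw [mul_assoc, ← ENNReal.ofReal_mul ht.le, mul_one_div_cancel ht.ne']; simp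
      _ ≤ volume {x | 0 < d x ∧ d x < t} * ENNReal.ofReal (1 / t) := by
          gcongr; exact (hK t ht).trans hvol
      _ = ∫⁻ x in {x | 0 < d x ∧ d x < t}, ENNReal.ofReal (1 / t) := by
          rw [setLIntegral_const, mul_comm]
      _ ≤ _ := by
          refine setLIntegral_mono' hms fun x hx => ?_
          apply ENNReal.ofReal_le_ofReal
          exact one_div_le_one_div_of_le hx.1 hx.2.le
  have htop : μ {x | 0 < d x} = ⊤ := by
    by_contra hne
    have hpos : ∀ n : ℕ, (0:ℝ) < 1 / ((n:ℝ) + 1) := fun n => by positivity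
    have hlim := tendsto_measure_iInter_atTop (μ := μ)
      (s := fun n : ℕ => {x | 0 < d x ∧ d x < 1 / ((n:ℝ) + 1)})
      (fun n => ((measurableSet_lt measurable_const hdm).inter
        (measurableSet_lt hdm measurable_const)).nullMeasurableSet)
      (fun m n hmn x hx => ⟨hx.1, hx.2.trans_le (by
        apply one_div_le_one_div_of_le (by positivity)
        have : (m:ℝ) ≤ n := by exact_mod_cast hmn
        linarith)⟩)
      ⟨0, ne_top_of_le_ne_top hne (measure_mono fun x hx => hx.1)⟩
    have hempty : (⋂ n : ℕ, {x | 0 < d x ∧ d x < 1 / ((n:ℝ) + 1)}) = ∅ := by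
      ext x
      simp only [mem_iInter, mem_ofPred_eq, mem_empty_iff_false, iff_false, not_forall]
      by_cases h0 : 0 < d x
      · obtain ⟨n, hn⟩ := exists_nat_one_div_lt h0
        exact ⟨n, fun h => lt_asymm hn h.2⟩
      · exact ⟨0, fun h => h0 h.1⟩
    rw [hempty, measure_empty] at hlim
    have : K ≤ 0 := ge_of_tendsto' hlim fun n => hlow _ (hpos n) (by
      rw [div_le_one (by positivity)]; linarith [(Nat.cast_nonneg n : (0:ℝ) ≤ n)])
    exact hK0 (le_antisymm this bot_le)
  have hmono : Monotone (fun n : ℕ => {x | 2 * (1 / (2 * ((n:ℝ) + 1))) ≤ d x}) := by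
    intro m n hmn x hx
    have hx' : 2 * (1 / (2 * ((m:ℝ) + 1))) ≤ d x := hx
    refine le_trans ?_ hx'
    have : (m:ℝ) ≤ n := by exact_mod_cast hmn
    gcongr
  have hlim := tendsto_measure_iUnion_atTop (μ := μ) hmono
  have hun : (⋃ n : ℕ, {x | 2 * (1 / (2 * ((n:ℝ) + 1))) ≤ d x}) = {x | 0 < d x} := by
    ext x
    simp only [mem_iUnion, mem_ofPred_eq]
    constructor
    · rintro ⟨n, hn⟩
      exact lt_of_lt_of_le (by positivity) hn
    · intro h0
      obtain ⟨n, hn⟩ := exists_nat_one_div_lt h0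
      refine ⟨n, le_trans (le_of_eq ?_) hn.le⟩
      field_simp
  rw [hun, htop] at hlim
  obtain ⟨n, hn⟩ := (hlim.eventually (lt_mem_nhds hM.lt_top)).exists
  refine ⟨1 / (2 * ((n:ℝ) + 1)), by positivity, ?_, ?_⟩
  · apply one_div_le_one_div_of_le (by norm_num)
    linarith [(Nat.cast_nonneg n : (0:ℝ) ≤ n)]
  · simp only [Function.comp] at hn
    rw [hμs _ (measurableSet_le measurable_const hdm)] at hn
    exact hn

/-- The model kernel. -/
noncomputable def ker (p ε : ℝ) (z : Eucl 2) : ℝ≥0∞ :=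
  ENNReal.ofReal ((min 1 (‖z‖ / ε)) ^ p / ‖z‖ ^ (3:ℝ))

lemma ker_meas (p ε : ℝ) : Measurable (ker p ε) := by
  unfold ker; fun_prop

lemma ker_one_finite (p : ℝ) (hp : 1 < p) : ∫⁻ z, ker p 1 z ≠ ⊤ := by
  have hint : Integrable (fun z : Eucl 2 => (min 1 ‖z‖) ^ p / ‖z‖ ^ (3:ℝ)) volume := by
    have := (integrable_fun_norm_addHaar (volume : Measure (Eucl 2))
      (f := fun t : ℝ => (min 1 t) ^ p / t ^ (3:ℝ)))
    refine this.2 ?_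
    rw [← Ioc_union_Ioi_eq_Ioi (zero_le_one' ℝ)]
    refine IntegrableOn.union ?_ ?_
    · have h : IntegrableOn (fun t : ℝ => t ^ (p - 2)) (Ioc 0 1) := by
        rw [integrableOn_Ioc_iff_integrableOn_Ioo,
          intervalIntegral.integrableOn_Ioo_rpow_iff zero_lt_one]
        linarith
      refine h.congr_fun (fun t ht => ?_) measurableSet_Ioc
      simp only [finrank_euclideanSpace, Fintype.card_fin, smul_eq_mul, min_eq_right ht.2]
      norm_num
      rw [← Real.rpow_natCast t 3, ← Real.rpow_sub ht.1, mul_comm, ← Real.rpow_add_one ht.1.ne']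
      congr 1; push_cast; ring
    · have h := integrableOn_Ioi_rpow_of_lt (by norm_num : (-2:ℝ) < -1) zero_lt_one
      refine h.congr_fun (fun t ht => ?_) measurableSet_Ioi
      have ht0 : (0:ℝ) < t := zero_lt_one.trans ht
      simp only [finrank_euclideanSpace, Fintype.card_fin, smul_eq_mul, min_eq_left (le_of_lt (mem_Ioi.1 ht))]
      rw [Real.one_rpow, Real.rpow_neg ht0.le]
      norm_num
      field_simp
  have := hint.lintegral_lt_top
  unfold ker
  simpa using this.ne

lemma ker_scale (p ε : ℝ) (hε : 0 < ε) :
    ∫⁻ z, ker p ε z = ENNReal.ofReal (1 / ε) * ∫⁻ z, ker p 1 z := by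
  have h1 : ∀ z, ker p ε z = ENNReal.ofReal (1 / ε ^ 3) * ker p 1 (ε⁻¹ • z) := by
    intro z
    unfold ker
    rw [← ENNReal.ofReal_mul (by positivity), norm_smul, norm_inv, Real.norm_eq_abs,
      abs_of_pos hε, div_one, Real.mul_rpow (by positivity) (by positivity),
      Real.inv_rpow hε.le]
    congr 1
    rw [← div_eq_inv_mul]
    norm_num
    field_simp
  simp_rw [h1]
  rw [lintegral_const_mul' _ _ ENNReal.ofReal_ne_top,
    ← lintegral_map (ker_meas p 1) (measurable_const_smul (ε⁻¹)),
    Measure.map_addHaar_smul _ (inv_ne_zero hε.ne'), lintegral_smul_measure, smul_eq_mul,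
    ← mul_assoc, ← ENNReal.ofReal_mul (by positivity)]
  congr 2
  simp only [finrank_euclideanSpace, Fintype.card_fin]
  rw [abs_of_pos (by positivity)]
  field_simp

/-- Majorant of the kernel of a cutoff function. -/
noncomputable def maj (p ε : ℝ) (S : Set (Eucl 2)) (x y : Eucl 2) : ℝ≥0∞ :=
  S.indicator 1 x * ker p ε (x - y) + S.indicator 1 y * ker p ε (x - y)

lemma maj_meas (p ε : ℝ) {S : Set (Eucl 2)} (hS : MeasurableSet S) :
    Measurable (Function.uncurry (maj p ε S)) := by
  have h := ker_meas p ε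
  have hi : Measurable (S.indicator (1 : Eucl 2 → ℝ≥0∞)) := measurable_one.indicator hS
  have hk : Measurable (fun q : Eucl 2 × Eucl 2 => ker p ε (q.1 - q.2)) :=
    h.comp (measurable_fst.sub measurable_snd)
  exact ((hi.comp measurable_fst).mul hk).add ((hi.comp measurable_snd).mul hk)

lemma maj_int (p ε : ℝ) {S : Set (Eucl 2)} (hS : MeasurableSet S) :
    ∫⁻ x, ∫⁻ y, maj p ε S x y = 2 * (volume S * ∫⁻ z, ker p ε z) := by
  have h := ker_meas p ε
  have hi : Measurable (S.indicator (1 : Eucl 2 → ℝ≥0∞)) := measurable_one.indicator hS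
  have hk : Measurable (fun q : Eucl 2 × Eucl 2 => ker p ε (q.1 - q.2)) :=
    h.comp (measurable_fst.sub measurable_snd)
  have hA : Measurable (fun q : Eucl 2 × Eucl 2 => S.indicator 1 q.1 * ker p ε (q.1 - q.2)) :=
    (hi.comp measurable_fst).mul hk
  have hB : Measurable (fun q : Eucl 2 × Eucl 2 => S.indicator 1 q.2 * ker p ε (q.1 - q.2)) :=
    (hi.comp measurable_snd).mul hk
  have e1 : ∫⁻ x, ∫⁻ y, S.indicator 1 x * ker p ε (x - y) = volume S * ∫⁻ z, ker p ε z := by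
    have : ∀ x : Eucl 2, ∫⁻ y, S.indicator 1 x * ker p ε (x - y)
        = S.indicator 1 x * ∫⁻ z, ker p ε z := by
      intro x
      rw [lintegral_const_mul _ (by fun_prop),
        lintegral_sub_left_eq_self]
    simp_rw [this]
    rw [lintegral_mul_const _ hi, lintegral_indicator_one hS]
  have e2 : ∫⁻ x, ∫⁻ y, S.indicator 1 y * ker p ε (x - y) = volume S * ∫⁻ z, ker p ε z := by
    rw [lintegral_lintegral_swap hB.aemeasurable]
    have : ∀ y : Eucl 2, ∫⁻ x, S.indicator 1 y * ker p ε (x - y)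
        = S.indicator 1 y * ∫⁻ z, ker p ε z := by
      intro y
      rw [lintegral_const_mul _ (by fun_prop),
        lintegral_sub_right_eq_self (fun x => ker p ε x)]
    simp_rw [this]
    rw [lintegral_mul_const _ hi, lintegral_indicator_one hS]
  unfold maj
  have e3 : ∀ x : Eucl 2, ∫⁻ y, (S.indicator 1 x * ker p ε (x - y) +
      S.indicator 1 y * ker p ε (x - y)) = (∫⁻ y, S.indicator 1 x * ker p ε (x - y)) +
      ∫⁻ y, S.indicator 1 y * ker p ε (x - y) :=
    fun x => lintegral_add_left (hA.comp measurable_prodMk_left) _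
  simp_rw [e3]
  rw [lintegral_add_left hA.lintegral_prod_right', e1, e2, two_mul]

/-- The cutoff, equal to `1` up to distance `ε` and to `0` beyond distance `2ε`. -/
noncomputable def cut (ε t : ℝ) : ℝ := max 0 (min 1 (2 - t / ε))

lemma cut_nonneg (ε t : ℝ) : 0 ≤ cut ε t := le_max_left _ _

lemma cut_le_one (ε t : ℝ) : cut ε t ≤ 1 := max_le zero_le_one (min_le_left _ _)

lemma cut_zero {ε t : ℝ} (hε : 0 < ε) (h : 2 * ε ≤ t) : cut ε t = 0 := by
  have : 2 ≤ t / ε := by rwa [le_div_iff₀ hε]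
  exact max_eq_left ((min_le_right _ _).trans (by linarith))

lemma cut_one {ε t : ℝ} (hε : 0 < ε) (h : t ≤ ε) : cut ε t = 1 := by
  have : t / ε ≤ 1 := by rwa [div_le_one hε]
  rw [cut, min_eq_left (by linarith), max_eq_right zero_le_one]

lemma cut_lip (ε s t : ℝ) (hε : 0 < ε) : |cut ε s - cut ε t| ≤ |s - t| / ε := by
  unfold cut
  calc _ ≤ |min 1 (2 - s / ε) - min 1 (2 - t / ε)| := by
        have := abs_max_sub_max_le_max 0 (min 1 (2 - s / ε)) 0 (min 1 (2 - t / ε))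
        simpa using this
    _ ≤ |(2 - s / ε) - (2 - t / ε)| := by
        have := abs_min_sub_min_le_max 1 (2 - s / ε) 1 (2 - t / ε)
        simpa using this
    _ = |s - t| / ε := by
        rw [show (2 - s / ε) - (2 - t / ε) = -((s - t) / ε) by ring, abs_neg, abs_div,
          abs_of_pos hε]

lemma cut_kernel (L : Set (Eucl 2)) (p ε : ℝ) (hp : 1 < p) (hε : 0 < ε) (x y : Eucl 2) :
    ENNReal.ofReal (|cut ε (infDist x L) - cut ε (infDist y L)| ^ p / dist x y ^ (3:ℝ)) ≤
      maj p ε {x | infDist x L < 2 * ε} x y := by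
  have hk : ENNReal.ofReal (|cut ε (infDist x L) - cut ε (infDist y L)| ^ p / dist x y ^ (3:ℝ))
      ≤ ker p ε (x - y) := by
    unfold ker
    rw [dist_eq_norm]
    apply ENNReal.ofReal_le_ofReal
    gcongr
    apply le_min
    · rw [abs_le]
      constructor <;>
      linarith [cut_nonneg ε (infDist x L), cut_nonneg ε (infDist y L),
        cut_le_one ε (infDist x L), cut_le_one ε (infDist y L)]
    · refine (cut_lip ε _ _ hε).trans ?_
      gcongr
      rw [← dist_eq_norm]
      have := (lipschitz_infDist_pt L).dist_le_mul x y
      simpa [Real.dist_eq] using this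
  unfold maj
  by_cases hx : infDist x L < 2 * ε
  · rw [indicator_of_mem (by exact hx)]
    simp only [Pi.one_apply, one_mul]
    exact hk.trans le_self_add
  by_cases hy : infDist y L < 2 * ε
  · rw [indicator_of_mem (a := y) (by exact hy)]
    simp only [Pi.one_apply, one_mul]
    exact hk.trans le_add_self
  rw [cut_zero hε (not_lt.1 hx), cut_zero hε (not_lt.1 hy)]
  rw [sub_self, abs_zero, Real.zero_rpow (by linarith), zero_div, ENNReal.ofReal_zero]
  exact bot_le

lemma add_rpow_le (p A B : ℝ) (hp : 1 < p) (hA : 0 ≤ A) (hB : 0 ≤ B) :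
    (A + B) ^ p ≤ 2 ^ p * (A ^ p + B ^ p) := by
  have h0 : 0 ≤ A ^ p := Real.rpow_nonneg hA p
  have h0' : 0 ≤ B ^ p := Real.rpow_nonneg hB p
  have h2 : (0:ℝ) ≤ 2 ^ p := by positivity
  rcases le_total A B with h | h
  · calc (A + B) ^ p ≤ (2 * B) ^ p := by gcongr; linarith
      _ = 2 ^ p * B ^ p := Real.mul_rpow (by norm_num) hB
      _ ≤ _ := by gcongr; linarith
  · calc (A + B) ^ p ≤ (2 * A) ^ p := by gcongr; linarith
      _ = 2 ^ p * A ^ p := Real.mul_rpow (by norm_num) hA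
      _ ≤ _ := by gcongr; linarith

/-- The test functions. -/
noncomputable def tst (L : Set (Eucl 2)) (ε : ℝ) (x : Eucl 2) : ℝ :=
  cut 1 (infDist x L) - cut ε (infDist x L)

lemma tst_kernel (L : Set (Eucl 2)) (p ε : ℝ) (hp : 1 < p) (hε : 0 < ε) (x y : Eucl 2) :
    fracKernel 2 (1 / p) p (tst L ε) x y ≤ ENNReal.ofReal (2 ^ p) *
      (maj p 1 {x | infDist x L < 2 * 1} x y + maj p ε {x | infDist x L < 2 * ε} x y) := by
  have hexp : ((2:ℕ):ℝ) + 1 / p * p = 3 := by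
    rw [one_div_mul_cancel (by linarith)]; norm_num
  rw [fracKernel, hexp]
  refine le_trans ?_ (mul_le_mul_right (add_le_add (cut_kernel L p 1 hp one_pos x y)
    (cut_kernel L p ε hp hε x y)) _)
  rw [← ENNReal.ofReal_add (by positivity) (by positivity),
    ← ENNReal.ofReal_mul (by positivity), ← add_div, ← mul_div_assoc]
  apply ENNReal.ofReal_le_ofReal
  gcongr
  refine le_trans ?_ (add_rpow_le p _ _ hp (abs_nonneg _) (abs_nonneg _))
  gcongr
  unfold tst
  rw [sub_sub_sub_comm]
  exact abs_sub _ _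

lemma energy_bound (a b : Eucl 2) (hab : a ≠ b) (p : ℝ) (hp : 1 < p) :
    ∃ M : ℝ≥0∞, M ≠ ⊤ ∧ ∀ ε : ℝ, 0 < ε → ε ≤ 1 →
      fracEnergy 2 (1 / p) p (segment ℝ a b)ᶜ (tst (segment ℝ a b) ε) ≤ M := by
  obtain ⟨K, hK, hvol⟩ := vol_upper a b hab
  set L := segment ℝ a b with hL
  set A := ∫⁻ z, ker p 1 z with hA
  have hAt : A ≠ ⊤ := ker_one_finite p hp
  have hS : ∀ ε : ℝ, MeasurableSet {x : Eucl 2 | infDist x L < 2 * ε} := fun ε =>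
    measurableSet_lt (continuous_infDist_pt L).measurable measurable_const
  have hmaj : ∀ ε : ℝ, 0 < ε → ε ≤ 1 →
      ∫⁻ x, ∫⁻ y, maj p ε {x | infDist x L < 2 * ε} x y ≤ 2 * (K * A) := by
    intro ε hε hε1
    rw [maj_int p ε (hS ε), ker_scale p ε hε]
    refine mul_le_mul_right ?_ _
    calc _ ≤ K * ENNReal.ofReal ε * (ENNReal.ofReal (1 / ε) * A) := by
          gcongr; exact hvol ε hε hε1
      _ = K * (ENNReal.ofReal ε * ENNReal.ofReal (1 / ε)) * A := by ring
      _ = K * A := by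
          rw [← ENNReal.ofReal_mul hε.le, mul_one_div_cancel hε.ne']; simp
  refine ⟨ENNReal.ofReal (2 ^ p) * (2 * (K * A) + 2 * (K * A)), by finiteness, ?_⟩
  intro ε hε hε1
  unfold fracEnergy
  calc _ ≤ ∫⁻ x, ∫⁻ y, ENNReal.ofReal (2 ^ p) *
      (maj p 1 {x | infDist x L < 2 * 1} x y + maj p ε {x | infDist x L < 2 * ε} x y) := by
        refine (setLIntegral_le_lintegral _ _).trans (lintegral_mono fun x => ?_)
        exact (setLIntegral_le_lintegral _ _).trans
          (lintegral_mono fun y => tst_kernel L p ε hp hε x y)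
    _ = ENNReal.ofReal (2 ^ p) * ((∫⁻ x, ∫⁻ y, maj p 1 {x | infDist x L < 2 * 1} x y) +
          ∫⁻ x, ∫⁻ y, maj p ε {x | infDist x L < 2 * ε} x y) := by
        have m1 := maj_meas p 1 (hS 1)
        have m2 := maj_meas p ε (hS ε)
        have m3 : Measurable fun x => ∫⁻ y, maj p 1 {x | infDist x L < 2 * 1} x y :=
          m1.lintegral_prod_right'
        rw [← lintegral_add_left m3,
          ← lintegral_const_mul' _ _ ENNReal.ofReal_ne_top]
        refine lintegral_congr fun x => ?_
        rw [lintegral_const_mul' _ _ ENNReal.ofReal_ne_top,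
          lintegral_add_left (show Measurable (maj p 1 _ x) from m1.comp measurable_prodMk_left)]
    _ ≤ _ := by
        gcongr
        · exact hmaj 1 one_pos le_rfl
        · exact hmaj ε hε hε1

end HardyFail

/-- Failure of the fractional `(1/p, p, p)`-Hardy inequality in the
complement of a line segment: let `L ⊆ ℝ²` be a closed line segment and
`D = ℝ² ∖ L`. For every `1 < p < ∞` and `δ = 1/p`, and for every constant `C > 0`,
there is `u ∈ C₀(D)` with
`∫_D |u x|^p / dist(x,∂D) dx > C ∫_D ∫_D |u x - u y|^p / |x-y|^3 dy dx`. -/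
theorem statement18 (a b : Eucl 2) (hab : a ≠ b) (p : ℝ) (hp : 1 < p) :
    ∀ C : ℝ, 0 < C →
      ∃ u : Eucl 2 → ℝ, Continuous u ∧ HasCompactSupport u ∧
        tsupport u ⊆ (segment ℝ a b)ᶜ ∧
        ENNReal.ofReal C * fracEnergy 2 (1 / p) p (segment ℝ a b)ᶜ u
          < ∫⁻ x in (segment ℝ a b)ᶜ,
              ENNReal.ofReal
                (|u x| ^ p / infDist x (frontier (segment ℝ a b)ᶜ)) ∂volume := by
  intro C hC
  obtain ⟨M, hM, hE⟩ := HardyFail.energy_bound a b hab p hp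
  obtain ⟨ε, hε, hε2, hlt⟩ := HardyFail.hardy_large a b hab (ENNReal.ofReal C * M)
    (ENNReal.mul_ne_top ENNReal.ofReal_ne_top hM)
  set L := segment ℝ a b with hL
  have hLc : IsCompact L := HardyFail.seg_compact a b
  have hLne : L.Nonempty := ⟨a, left_mem_segment ℝ a b⟩
  have hdc : Continuous fun x : Eucl 2 => infDist x L := continuous_infDist_pt L
  have hsupp : tsupport (HardyFail.tst L ε) ⊆ {x | ε ≤ infDist x L ∧ infDist x L ≤ 2} := by
    apply closure_minimal
    · intro x hx
      by_contra hcon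
      apply hx
      simp only [mem_ofPred_eq, not_and_or, not_le] at hcon
      unfold HardyFail.tst
      rcases hcon with h | h
      · rw [HardyFail.cut_one one_pos (by linarith), HardyFail.cut_one hε h.le, sub_self]
      · rw [HardyFail.cut_zero one_pos (by linarith), HardyFail.cut_zero hε (by linarith),
          sub_self]
    · exact (isClosed_le continuous_const hdc).inter (isClosed_le hdc continuous_const)
  refine ⟨HardyFail.tst L ε, ?_, ?_, ?_, ?_⟩
  · unfold HardyFail.tst HardyFail.cut
    fun_prop
  · refine IsCompact.of_isClosed_subset (hLc.cthickening (r := 2)) (isClosed_tsupport _) ?_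
    intro x hx
    rw [mem_cthickening_iff, ENNReal.le_ofReal_iff_toReal_le (infEDist_ne_top hLne) (by norm_num)]
    exact (hsupp hx).2
  · intro x hx hxL
    have h1 := (hsupp hx).1
    rw [infDist_zero_of_mem hxL] at h1
    linarith
  · rw [HardyFail.seg_frontier a b hab]
    refine lt_of_le_of_lt (mul_le_mul_right (hE ε hε (by linarith)) _) (hlt.trans_le ?_)
    have hms : MeasurableSet {x : Eucl 2 | 2 * ε ≤ infDist x L ∧ infDist x L ≤ 1} :=
      (measurableSet_le measurable_const hdc.measurable).inter
        (measurableSet_le hdc.measurable measurable_const)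
    refine le_trans (setLIntegral_mono' hms fun x hx => ?_) (lintegral_mono_set ?_)
    · unfold HardyFail.tst
      rw [HardyFail.cut_one one_pos hx.2, HardyFail.cut_zero hε hx.1]
      simp [← hL]
    · intro x hx hxL
      have h1 := hx.1
      rw [infDist_zero_of_mem hxL] at h1
      linarith
end
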